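/- arXiv:math/0610022 — 3 statements merged into one kernel-verified Lean document; each statement's English description precedes it below -/
import Mathlib

section
/- The total number, summed over all n with 4 ≤ n ≤ 100, of isomorphism classes of equivelar combinatorial surfaces on Fin n that are orientable with Euler characteristic 0 (equivelar triangulations of the torus) is exactly 1357, and the total number of isomorphism classes of equivelar combinatorial surfaces on Fin n with 4 ≤ n ≤ 100 that are non-orientable with Euler characteristic 0 (equivelar triangulations of the Klein bottle) is exactly 364. -/
open Finset

section Defs

variable {α : Type*} [DecidableEq α]

/-- The 1-skeleton graph of a set of faces: two vertices are adjacent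
if they lie together in a common face of `S`. -/
def skeletonGraph (S : Finset (Finset α)) : SimpleGraph α where
  Adj a b := a ≠ b ∧ ∃ T ∈ S, a ∈ T ∧ b ∈ T
  symm := by
    constructor
    rintro a b ⟨hab, T, hT, ha, hb⟩
    exact ⟨hab.symm, T, hT, hb, ha⟩
  loopless := by constructor; rintro a ⟨h, -⟩; exact h rfl

/-- The link graph of a vertex `v`: `a` and `b` are adjacent
if `{v, a, b}` is a triangle of `S`. -/
def linkGraph (S : Finset (Finset α)) (v : α) : SimpleGraph α where
  Adj a b := a ≠ b ∧ ({v, a, b} : Finset α) ∈ S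
  symm := by
    constructor
    rintro a b ⟨hab, h⟩
    refine ⟨hab.symm, ?_⟩
    rwa [Finset.pair_comm b a]
  loopless := by constructor; rintro a ⟨h, -⟩; exact h rfl

/-- The set of neighbors of the vertex `v` in `S`. -/
def nbrSet (S : Finset (Finset α)) (v : α) : Set α :=
  {a | a ≠ v ∧ ∃ T ∈ S, v ∈ T ∧ a ∈ T}

/-- The edges of `S`: the 2-element subsets of `V` contained in some face of `S`. -/
def edgesOn (V : Finset α) (S : Finset (Finset α)) : Finset (Finset α) :=
  V.powerset.filter fun e => e.card = 2 ∧ ∃ T ∈ S, e ⊆ T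

/-- `S` is a combinatorial surface on the vertex set `V`: all faces are triangles
on `V`, every vertex of `V` lies in a triangle, every edge lies in exactly two
triangles, the link graph of every vertex (induced on the neighbors of the
vertex) is connected, and the 1-skeleton (induced on `V`) is connected. -/
def IsCombSurfaceOn (V : Finset α) (S : Finset (Finset α)) : Prop :=
  (∀ T ∈ S, T.card = 3 ∧ T ⊆ V) ∧
  (∀ v ∈ V, ∃ T ∈ S, v ∈ T) ∧
  (∀ e : Finset α, e.card = 2 → (∃ T ∈ S, e ⊆ T) →
    (S.filter fun T => e ⊆ T).card = 2) ∧
  (∀ v ∈ V, ((linkGraph S v).induce (nbrSet S v)).Connected) ∧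
  ((skeletonGraph S).induce (V : Set α)).Connected

/-- The Euler characteristic `χ = |V| - f₁ + f₂` of `S` on the vertex set `V`. -/
def eulerCharOn (V : Finset α) (S : Finset (Finset α)) : ℤ :=
  (V.card : ℤ) - ((edgesOn V S).card : ℤ) + (S.card : ℤ)

/-- `S` is equivelar (degree-regular): all vertices of `V` lie in the same
number `q` of triangles. -/
def IsEquivelarOn (V : Finset α) (S : Finset (Finset α)) : Prop :=
  ∃ q : ℕ, ∀ v ∈ V, (S.filter fun T => v ∈ T).card = q

/-- The directed edges of the cyclic ordering given by an ordered triple. -/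
def dirEdges (t : α × α × α) : Finset (α × α) :=
  {(t.1, t.2.1), (t.2.1, t.2.2), (t.2.2, t.1)}

/-- `S` is orientable: one can choose a cyclic ordering of each triangle so that
for every edge `{a, b}` lying in two triangles, the two chosen cyclic orderings
traverse the edge in opposite directions. -/
def IsOrientable (S : Finset (Finset α)) : Prop :=
  ∃ o : Finset α → α × α × α,
    (∀ T ∈ S, ({(o T).1, (o T).2.1, (o T).2.2} : Finset α) = T) ∧
    (∀ T ∈ S, ∀ T' ∈ S, T ≠ T' → ∀ x y : α,
      (x, y) ∈ dirEdges (o T) → ({x, y} : Finset α) ⊆ T' →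
      (y, x) ∈ dirEdges (o T'))

/-- The link of a vertex `v` in a 3-dimensional complex `S`:
the triangles `{a,b,c}` with `{v,a,b,c} ∈ S`. -/
def linkOf (S : Finset (Finset α)) (v : α) : Finset (Finset α) :=
  (S.filter fun T => v ∈ T).image fun T => T.erase v

end Defs

/-- `S` is a combinatorial surface on the vertex set `Fin n`. -/
def IsCombSurface (n : ℕ) (S : Finset (Finset (Fin n))) : Prop :=
  IsCombSurfaceOn Finset.univ S

/-- The Euler characteristic of a complex on the vertex set `Fin n`. -/
def eulerChar (n : ℕ) (S : Finset (Finset (Fin n))) : ℤ :=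
  eulerCharOn Finset.univ S

/-- `S` is equivelar on `Fin n`. -/
def IsEquivelar (n : ℕ) (S : Finset (Finset (Fin n))) : Prop :=
  IsEquivelarOn Finset.univ S

/-- `S` is neighborly: every 2-element subset of `Fin n` is an edge. -/
def IsNeighborly (n : ℕ) (S : Finset (Finset (Fin n))) : Prop :=
  ∀ e : Finset (Fin n), e.card = 2 → ∃ T ∈ S, e ⊆ T

/-- Two labeled complexes on `Fin n` are isomorphic if a permutation of the
vertices maps the faces of one onto the faces of the other. -/
def IsoComplex (n : ℕ) (S S' : Finset (Finset (Fin n))) : Prop :=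
  ∃ σ : Equiv.Perm (Fin n), S.image (fun T => T.image σ) = S'

/-- The number of isomorphism classes (orbits under the symmetric group)
of complexes on `Fin n` satisfying `P`. -/
noncomputable def numClasses (n : ℕ) (P : Finset (Finset (Fin n)) → Prop) : ℕ :=
  Nat.card (Quot fun A B : {S : Finset (Finset (Fin n)) // P S} => IsoComplex n A.1 B.1)

/-- The neighbors of a vertex `v` in a complex `S` on `Fin n`. -/
def vertexNbrs (n : ℕ) (S : Finset (Finset (Fin n))) (v : Fin n) : Finset (Fin n) :=
  Finset.univ.filter fun a => a ≠ v ∧ ∃ T ∈ S, v ∈ T ∧ a ∈ T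

/-- `S` is a combinatorial 3-manifold on the vertex set `Fin n`: all faces are
tetrahedra, every vertex lies in a tetrahedron, every triangle contained in a
tetrahedron lies in exactly two tetrahedra, the link of every vertex is a
combinatorial surface (on the neighbors of the vertex) with Euler
characteristic 2, and the 1-skeleton is connected. -/
def IsComb3Manifold (n : ℕ) (S : Finset (Finset (Fin n))) : Prop :=
  (∀ T ∈ S, T.card = 4) ∧
  (∀ v : Fin n, ∃ T ∈ S, v ∈ T) ∧
  (∀ F : Finset (Fin n), F.card = 3 → (∃ T ∈ S, F ⊆ T) →
    (S.filter fun T => F ⊆ T).card = 2) ∧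
  (∀ v : Fin n, IsCombSurfaceOn (vertexNbrs n S v) (linkOf S v) ∧
    eulerCharOn (vertexNbrs n S v) (linkOf S v) = 2) ∧
  (skeletonGraph S).Connected

/-! ### The triangular lattice and its point group -/

/-- The six directions of the triangular lattice. -/
def hx (i : ZMod 6) : ℤ × ℤ :=
  (![(1, 0), (0, 1), (-1, 1), (-1, 0), (0, -1), (1, -1)] : Fin 6 → ℤ × ℤ) i

/-- The action of the dihedral group on the (indices of the) directions. -/
def dp : DihedralGroup 6 → ZMod 6 → ZMod 6
  | .r i, j => j + i
  | .sr i, j => -j - i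

/-- The linear action of the dihedral group on the lattice. -/
def act (g : DihedralGroup 6) (z : ℤ × ℤ) : ℤ × ℤ :=
  z.1 • hx (dp g 0) + z.2 • hx (dp g 1)

lemma hx_sum : ∀ i : ZMod 6, hx i + hx (i + 2) = hx (i + 1) := by decide

lemma hx_neg : ∀ i : ZMod 6, hx (i + 3) = - hx i := by decide

lemma hx_inj : ∀ i j : ZMod 6, hx i = hx j → i = j := by decide

lemma dp_mul : ∀ (g g' : DihedralGroup 6) (j : ZMod 6), dp (g * g') j = dp g (dp g' j) := by
  decide

lemma dp_succ : ∀ (g : DihedralGroup 6), (∀ j, dp g (j + 1) = dp g j + 1) ∨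
    (∀ j, dp g (j + 1) = dp g j - 1) := by decide

lemma act_hx : ∀ (g : DihedralGroup 6) (j : ZMod 6), act g (hx j) = hx (dp g j) := by
  decide

lemma act_add (g : DihedralGroup 6) (z w : ℤ × ℤ) : act g (z + w) = act g z + act g w := by
  simp only [act, Prod.fst_add, Prod.snd_add, add_smul]; abel

lemma act_zero (g : DihedralGroup 6) : act g 0 = 0 := by simp [act]

lemma act_zsmul (g : DihedralGroup 6) (k : ℤ) (z : ℤ × ℤ) : act g (k • z) = k • act g z := by
  simp only [act, Prod.smul_fst, Prod.smul_snd, smul_add, smul_smul, smul_eq_mul]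

lemma z2_eq (z : ℤ × ℤ) : z = z.1 • hx 0 + z.2 • hx 1 := by
  ext <;> simp [hx]

lemma act_mul (g g' : DihedralGroup 6) (z : ℤ × ℤ) : act (g * g') z = act g (act g' z) := by
  have h : act g' z = z.1 • hx (dp g' 0) + z.2 • hx (dp g' 1) := rfl
  rw [h, act_add, act_zsmul, act_zsmul, act_hx, act_hx, ← dp_mul, ← dp_mul]
  rfl

lemma act_one (z : ℤ × ℤ) : act 1 z = z := by
  conv_rhs => rw [z2_eq z]
  rfl

lemma act_inv_act (g : DihedralGroup 6) (z : ℤ × ℤ) : act g⁻¹ (act g z) = z := by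
  rw [← act_mul, inv_mul_cancel, act_one]

lemma act_act_inv (g : DihedralGroup 6) (z : ℤ × ℤ) : act g (act g⁻¹ z) = z := by
  rw [← act_mul, mul_inv_cancel, act_one]

lemma act_sub (g : DihedralGroup 6) (z w : ℤ × ℤ) : act g (z - w) = act g z - act g w := by
  rw [eq_sub_iff_add_eq, ← act_add, sub_add_cancel]

lemma act_neg (g : DihedralGroup 6) (z : ℤ × ℤ) : act g (-z) = - act g z := by
  rw [eq_neg_iff_add_eq_zero, ← act_add, neg_add_cancel, act_zero]

lemma act_injective (g : DihedralGroup 6) : Function.Injective (act g) := fun z w h => by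
  rw [← act_inv_act g z, h, act_inv_act]

instance : DistribMulAction (DihedralGroup 6) (ℤ × ℤ) where
  smul := act
  one_smul := act_one
  mul_smul := act_mul
  smul_zero := act_zero
  smul_add := act_add

lemma smul_def' (g : DihedralGroup 6) (z : ℤ × ℤ) : g • z = act g z := rfl

/-- Induction over the lattice by steps in the six directions. -/
lemma hx_induction (P : ℤ × ℤ → Prop) (h0 : P 0) (hs : ∀ z i, P z → P (z + hx i)) :
    ∀ z, P z := by
  have h1 : ∀ m : ℤ, P (m, 0) := by
    intro m
    induction m using Int.induction_on with
    | zero => exact h0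
    | succ k ih => have := hs _ 0 ih; simpa [hx] using this
    | pred k ih => have := hs _ 3 ih; simpa [hx, sub_eq_add_neg, show (3 : ZMod 6) = (3 : Fin 6) from rfl] using this
  rintro ⟨m, k⟩
  induction k using Int.induction_on with
  | zero => exact h1 m
  | succ k ih => have := hs _ 1 ih; simpa [hx] using this
  | pred k ih => have := hs _ 4 ih; simpa [hx, sub_eq_add_neg, show (4 : ZMod 6) = (4 : Fin 6) from rfl] using this

/-- Hexagonal distance at most two. -/
def HexSmall (u : ℤ × ℤ) : Prop := |u.1| ≤ 2 ∧ |u.2| ≤ 2 ∧ |u.1 + u.2| ≤ 2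

instance (u : ℤ × ℤ) : Decidable (HexSmall u) := by unfold HexSmall; infer_instance

lemma small_hx : ∀ i : ZMod 6, HexSmall (hx i) := by decide
lemma small_hx_sub : ∀ i j : ZMod 6, HexSmall (hx i - hx j) := by decide
lemma hx_ne_zero : ∀ i : ZMod 6, hx i ≠ 0 := by decide

/-- Every small nonzero vector is a direction or a difference of two directions. -/
lemma small_cases (u : ℤ × ℤ) (h : HexSmall u) : u = 0 ∨ (∃ i, u = hx i) ∨ ∃ i j, u = hx i - hx j := by
  obtain ⟨x, y⟩ := u
  obtain ⟨h1, h2, h3⟩ := h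
  simp only [abs_le] at h1 h2 h3
  obtain ⟨h1, h1'⟩ := h1
  obtain ⟨h2, h2'⟩ := h2
  interval_cases x <;> interval_cases y <;> first | (exfalso; revert h3; decide) | decide

lemma small_act (g : DihedralGroup 6) (u : ℤ × ℤ) (h : HexSmall u) : HexSmall (act g u) := by
  rcases small_cases u h with rfl | ⟨i, rfl⟩ | ⟨i, j, rfl⟩
  · rw [act_zero]; decide
  · rw [act_hx]; exact small_hx _
  · rw [act_sub, act_hx, act_hx]; exact small_hx_sub _ _

/-! ### Surfaces of degree six -/

section Surf

variable {V : Type*} [DecidableEq V]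

/-- A surface all of whose vertices have degree six. -/
structure Surf6 (S : Finset (Finset V)) : Prop where
  card3 : ∀ T ∈ S, T.card = 3
  edge2 : ∀ e : Finset V, e.card = 2 → (∃ T ∈ S, e ⊆ T) →
    (S.filter fun T => e ⊆ T).card = 2
  link : ∀ v, ((linkGraph S v).induce (nbrSet S v)).Connected
  conn : (skeletonGraph S).Connected
  deg : ∀ v, (S.filter fun T => v ∈ T).card = 6

lemma two_mul_edges [Fintype V] (S : Finset (Finset V)) (card3 : ∀ T ∈ S, T.card = 3)
    (edge2 : ∀ e : Finset V, e.card = 2 → (∃ T ∈ S, e ⊆ T) →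
      (S.filter fun T => e ⊆ T).card = 2) :
    (edgesOn Finset.univ S).card * 2 = S.card * 3 := by
  apply Finset.card_mul_eq_card_mul (fun e T => e ⊆ T)
  · intro e he
    simp only [edgesOn, mem_filter] at he
    exact edge2 e he.2.1 he.2.2
  · intro T hT
    have : bipartiteBelow (fun e T => e ⊆ T) (edgesOn Finset.univ S) T = T.powersetCard 2 := by
      ext e
      simp only [bipartiteBelow, edgesOn, mem_filter, mem_powersetCard, mem_powerset,
        Finset.subset_univ, true_and]
      constructor
      · rintro ⟨⟨h1, -⟩, h2⟩; exact ⟨h2, h1⟩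
      · rintro ⟨h1, h2⟩; exact ⟨⟨h2, T, hT, h1⟩, h1⟩
    rw [this, card_powersetCard, card3 T hT]; rfl

lemma induce_univ_conn {W : Type*} [Fintype W] (G : SimpleGraph W) :
    (G.induce ((Finset.univ : Finset W) : Set W)).Connected ↔ G.Connected := by
  rw [Finset.coe_univ]
  exact (SimpleGraph.induceUnivIso G).connected_iff

lemma surf6_of (n : ℕ) (S : Finset (Finset (Fin n))) (hS : IsCombSurface n S)
    (he : IsEquivelar n S) (hc : eulerChar n S = 0) : Surf6 S := by
  obtain ⟨h1, h2, h3, h4, h5⟩ := hS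
  obtain ⟨q, hq⟩ := he
  have c3 : ∀ T ∈ S, T.card = 3 := fun T hT => (h1 T hT).1
  have e1 := two_mul_edges S c3 h3
  have e2 := Finset.sum_card (B := S) (n := q) (fun a => hq a (mem_univ _))
  rw [Finset.sum_congr rfl c3] at e2
  simp only [sum_const, smul_eq_mul, Fintype.card_fin] at e2
  have hcn : (skeletonGraph S).Connected := (induce_univ_conn _).1 h5
  have hn : 0 < n := by
    obtain ⟨⟨x, hx⟩⟩ := hcn.nonempty
    omega
  have hq6 : q = 6 := by
    simp only [eulerChar, eulerCharOn, card_univ, Fintype.card_fin] at hc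
    have : n * q = n * 6 := by rw [← e2]; omega
    exact Nat.eq_of_mul_eq_mul_left hn this
  subst hq6
  exact ⟨c3, h3, fun v => h4 v (mem_univ _), hcn, fun v => hq v (mem_univ _)⟩

lemma Surf6.euler {n : ℕ} {S : Finset (Finset (Fin n))} (h : Surf6 S) :
    IsCombSurface n S ∧ IsEquivelar n S ∧ eulerChar n S = 0 := by
  refine ⟨⟨fun T hT => ⟨h.card3 T hT, subset_univ _⟩, fun v _ => ?_, h.edge2,
    fun v _ => h.link v, (induce_univ_conn _).2 h.conn⟩, ⟨6, fun v _ => h.deg v⟩, ?_⟩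
  · have : (S.filter fun T => v ∈ T).Nonempty := by rw [← card_pos, h.deg]; norm_num
    obtain ⟨T, hT⟩ := this
    rw [mem_filter] at hT
    exact ⟨T, hT⟩
  · have e1 := two_mul_edges S h.card3 h.edge2
    have e2 := Finset.sum_card (B := S) (n := 6) h.deg
    rw [Finset.sum_congr rfl h.card3] at e2
    simp only [sum_const, smul_eq_mul, Fintype.card_fin] at e2
    simp only [eulerChar, eulerCharOn, card_univ, Fintype.card_fin]
    omega

/-- `x, y, z` span a triangle of `S`. -/
def Tr (S : Finset (Finset V)) (x y z : V) : Prop := ({x, y, z} : Finset V) ∈ S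

variable {S : Finset (Finset V)} {x y z w u v : V}

lemma Tr.s12 (h : Tr S x y z) : Tr S y x z := by
  unfold Tr at *; rwa [Finset.insert_comm]

lemma Tr.s23 (h : Tr S x y z) : Tr S x z y := by
  unfold Tr at *; rwa [Finset.pair_comm]

lemma Tr.s13 (h : Tr S x y z) : Tr S z y x := h.s12.s23.s12

lemma Tr.rot (h : Tr S x y z) : Tr S y z x := h.s12.s23

lemma Tr.ne (hS : Surf6 S) (h : Tr S x y z) : x ≠ y ∧ x ≠ z ∧ y ≠ z := by
  have h3 := hS.card3 _ h
  refine ⟨fun e => ?_, fun e => ?_, fun e => ?_⟩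
  · have := Finset.card_le_two (a := y) (b := z)
    rw [e, insert_eq_of_mem (by simp)] at h3; omega
  · have := Finset.card_le_two (a := y) (b := z)
    rw [e, insert_eq_of_mem (by simp)] at h3; omega
  · have := Finset.card_le_two (a := x) (b := z)
    rw [e, pair_eq_singleton] at h3; omega

lemma exists_third {T : Finset V} (hT : T.card = 3) (hx : x ∈ T) (hy : y ∈ T) (hxy : x ≠ y) :
    ∃ w, T = {x, y, w} ∧ w ≠ x ∧ w ≠ y := by
  have hsub : ({x, y} : Finset V) ⊆ T := by
    intro a ha; simp only [mem_insert, mem_singleton] at ha; rcases ha with rfl | rfl <;> assumption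
  have hc : (T \ {x, y}).card = 1 := by
    rw [card_sdiff_of_subset hsub, hT, card_pair hxy]
  obtain ⟨w, hw⟩ := card_eq_one.1 hc
  have hw' : w ∈ T \ {x, y} := by rw [hw]; exact mem_singleton_self _
  simp only [mem_sdiff, mem_insert, mem_singleton, not_or] at hw'
  refine ⟨w, ?_, hw'.2.1, hw'.2.2⟩
  rw [← sdiff_union_of_subset hsub, hw]
  ext a; simp only [mem_union, mem_singleton, mem_insert]; tauto

lemma exists_opp (hS : Surf6 S) (h : Tr S x y z) : ∃ w, w ≠ z ∧ Tr S x y w := by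
  have hne := h.ne hS
  have h2 := hS.edge2 {x, y} (card_pair hne.1) ⟨_, h, by intro a; simp; tauto⟩
  have hm : ({x, y, z} : Finset V) ∈ S.filter fun T => {x, y} ⊆ T := by
    rw [mem_filter]; exact ⟨h, by intro a; simp; tauto⟩
  obtain ⟨T, hT, hTn⟩ := Finset.exists_mem_ne (by omega) ({x, y, z} : Finset V)
    (s := S.filter fun T => {x, y} ⊆ T)
  rw [mem_filter] at hT
  obtain ⟨w, hw, -, -⟩ := exists_third (hS.card3 T hT.1) (hT.2 (by simp : x ∈ _))
    (hT.2 (by simp : y ∈ _)) hne.1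
  refine ⟨w, ?_, ?_⟩
  · rintro rfl; exact hTn hw
  · unfold Tr; rw [← hw]; exact hT.1

lemma opp_uniq (hS : Surf6 S) (h : Tr S x y z) (hw : Tr S x y w) (hu : Tr S x y u)
    (hwz : w ≠ z) (huz : u ≠ z) : w = u := by
  by_contra hwu
  have n1 := h.ne hS
  have n2 := hw.ne hS
  have n3 := hu.ne hS
  have h2 := hS.edge2 {x, y} (card_pair n1.1) ⟨_, h, by intro a; simp; tauto⟩
  have key : ∀ a b : V, a ≠ b → x ≠ a → y ≠ a → ({x, y, a} : Finset V) ≠ {x, y, b} := by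
    intro a b hab hxa hya he
    have : a ∈ ({x, y, b} : Finset V) := by rw [← he]; simp
    simp only [mem_insert, mem_singleton] at this
    rcases this with h | h | h
    · exact hxa h.symm
    · exact hya h.symm
    · exact hab h
  have hsub : ({{x, y, z}, {x, y, w}, {x, y, u}} : Finset (Finset V)) ⊆
      S.filter fun T => {x, y} ⊆ T := by
    intro T hT
    simp only [mem_insert, mem_singleton] at hT
    rw [mem_filter]
    rcases hT with rfl | rfl | rfl
    · exact ⟨h, by intro a; simp; tauto⟩
    · exact ⟨hw, by intro a; simp; tauto⟩
    · exact ⟨hu, by intro a; simp; tauto⟩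
  have := card_le_card hsub
  rw [h2, card_eq_three.2 ⟨_, _, _, key _ _ hwz.symm n1.2.1 n1.2.2,
    key _ _ huz.symm n1.2.1 n1.2.2, key _ _ hwu n2.2.1 n2.2.2, rfl⟩] at this
  omega

lemma mem_nbrSet_iff (hS : Surf6 S) : x ∈ nbrSet S v ↔ ∃ b, Tr S v x b := by
  constructor
  · rintro ⟨hne, T, hT, hv, hx⟩
    obtain ⟨w, hw, -, -⟩ := exists_third (hS.card3 T hT) hv hx hne.symm
    exact ⟨w, by unfold Tr; rw [← hw]; exact hT⟩
  · rintro ⟨b, hb⟩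
    exact ⟨(hb.ne hS).1.symm, _, hb, by simp, by simp⟩

open Classical in
lemma card_nbr [Fintype V] (hS : Surf6 S) (v : V) :
    (univ.filter fun a => a ∈ nbrSet S v).card = 6 := by
  have := Finset.card_mul_eq_card_mul (s := univ.filter fun a => a ∈ nbrSet S v)
    (t := S.filter fun T => v ∈ T) (m := 2) (n := 2) (fun a T => a ∈ T) ?_ ?_
  · rw [hS.deg] at this; omega
  · intro a ha
    simp only [mem_filter, mem_univ, true_and] at ha
    obtain ⟨hne, T, hT, hvT, haT⟩ := ha
    rw [← hS.edge2 {v, a} (card_pair hne.symm) ⟨T, hT, by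
      intro b hb; simp only [mem_insert, mem_singleton] at hb; rcases hb with rfl | rfl <;> assumption⟩]
    congr 1
    ext T'
    simp only [bipartiteAbove, mem_filter, insert_subset_iff, singleton_subset_iff]
    tauto
  · intro T hT
    rw [mem_filter] at hT
    have : bipartiteBelow (fun a T => a ∈ T) (univ.filter fun a => a ∈ nbrSet S v) T
        = T.erase v := by
      ext a
      simp only [bipartiteBelow, mem_filter, mem_univ, true_and, mem_erase]
      constructor
      · rintro ⟨⟨h1, -⟩, h2⟩; exact ⟨h1, h2⟩
      · rintro ⟨h1, h2⟩; exact ⟨⟨h1, T, hT.1, hT.2, h2⟩, h2⟩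
    rw [this, card_erase_of_mem hT.2, hS.card3 T hT.1]

/-- A set of neighbors of `v` closed under adjacency in the link is everything. -/
lemma link_closed (hS : Surf6 S) (R : Set V) (h0 : x ∈ R) (hx : ∃ b, Tr S v x b)
    (hcl : ∀ a b, a ∈ R → Tr S v a b → b ∈ R) (y : V) (hy : ∃ b, Tr S v y b) : y ∈ R := by
  have hc := (hS.link v).preconnected ⟨x, (mem_nbrSet_iff hS).2 hx⟩ ⟨y, (mem_nbrSet_iff hS).2 hy⟩
  obtain ⟨p⟩ := hc
  have : ∀ (a b : nbrSet S v) (p : ((linkGraph S v).induce (nbrSet S v)).Walk a b),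
      (a : V) ∈ R → (b : V) ∈ R := by
    intro a b p
    induction p with
    | nil => exact id
    | cons h _ ih => exact fun ha => ih (hcl _ _ ha h.2)
  exact this _ _ p h0

/-- A set of vertices closed under adjacency is everything. -/
lemma skel_closed (hS : Surf6 S) (R : Set V) (h0 : x ∈ R)
    (hcl : ∀ a b c, a ∈ R → Tr S a b c → b ∈ R) (y : V) : y ∈ R := by
  obtain ⟨p⟩ := hS.conn.preconnected x y
  have : ∀ (a b : V) (p : (skeletonGraph S).Walk a b), a ∈ R → b ∈ R := by
    intro a b p
    induction p with
    | nil => exact id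
    | cons h _ ih =>
      intro ha
      obtain ⟨hne, T, hT, h1, h2⟩ := h
      obtain ⟨w, hw, -, -⟩ := exists_third (hS.card3 T hT) h1 h2 hne
      exact ih (hcl _ _ w ha (by unfold Tr; rw [← hw]; exact hT))
  exact this _ _ p h0

/-- The link of a vertex is a hexagon. -/
lemma six_cycle [Fintype V] (hS : Surf6 S) (v : V) (x : ℕ → V)
    (hA : ∀ i, Tr S v (x i) (x (i + 1))) (hN : ∀ i, x i ≠ x (i + 2)) :
    (∀ i, x (i + 6) = x i) ∧ (∀ i j, i < 6 → j < 6 → x i = x j → i = j) ∧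
    (∀ a b, Tr S v a b → ∃ i, a = x i ) := by
  have hU : ∀ i w, Tr S v (x (i + 1)) w → w = x i ∨ w = x (i + 2) := by
    intro i w hw
    by_contra! hcon
    exact hcon.2 (opp_uniq hS (hA i).s23 hw (hA (i + 1)) hcon.1 (hN i).symm)
  have hadj : ∀ i, x i ≠ x (i + 1) := fun i => ((hA i).ne hS).2.2
  have hex : ∃ j, ∃ i < j, x i = x j := by
    obtain ⟨i, j, hij, h⟩ := Finite.exists_ne_map_eq_of_infinite x
    rcases lt_or_gt_of_ne hij with h' | h'
    · exact ⟨j, i, h', h⟩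
    · exact ⟨i, j, h', h.symm⟩
  classical
  obtain ⟨i, hij, hxij⟩ := Nat.find_spec hex
  have hmin : ∀ j' < Nat.find hex, ∀ i' < j', x i' ≠ x j' := fun j' hj' i' hi' he =>
    Nat.find_min hex hj' ⟨i', hi', he⟩
  generalize Nat.find hex = j at *
  have hinj : ∀ a b, a < j → b < j → x a = x b → a = b := by
    intro a b ha hb hab
    rcases lt_trichotomy a b with h | h | h
    · exact absurd hab (hmin b hb a h)
    · exact h
    · exact absurd hab.symm (hmin a ha b h)
  have hi0 : i = 0 := by
    rcases i with _ | i
    · rfl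
    exfalso
    obtain ⟨j, rfl⟩ : ∃ j', j = j' + 1 := ⟨j - 1, by omega⟩
    have h1 : Tr S v (x (i + 1)) (x j) := by rw [hxij]; exact (hA j).s23
    rcases hU i _ h1 with h | h
    · have := hinj j i (by omega) (by omega) h; omega
    · rcases Nat.lt_or_ge (i + 2) (j + 1) with h' | h'
      · have := hinj j (i + 2) (by omega) (by omega) h
        subst this
        exact hN (i + 1) hxij
      · have : j = i + 1 := by omega
        subst this
        exact hadj _ hxij
  subst hi0
  have hj3 : 3 ≤ j := by
    by_contra hlt
    have : j = 1 ∨ j = 2 := by omega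
    rcases this with rfl | rfl
    · exact hadj 0 hxij
    · exact hN 0 hxij
  have hper1 : x 1 = x (j + 1) := by
    obtain ⟨j, rfl⟩ : ∃ j', j = j' + 1 := ⟨j - 1, by omega⟩
    have h1 : Tr S v (x (j + 1)) (x 1) := by rw [← hxij]; exact hA 0
    rcases hU j _ h1 with h | h
    · have := hinj 1 j (by omega) (by omega) h; omega
    · exact h
  have hper : ∀ k, x (k + j) = x k ∧ x (k + 1 + j) = x (k + 1) := by
    intro k
    induction k with
    | zero => exact ⟨by rw [zero_add]; exact hxij.symm, by rw [hper1]; congr 1; omega⟩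
    | succ k ih =>
      refine ⟨ih.2, ?_⟩
      have h1 : Tr S v (x (k + 1)) (x (k + 1 + 1 + j)) := by
        rw [← ih.2, show k + 1 + 1 + j = (k + 1 + j) + 1 by omega]; exact hA _
      rcases hU k _ h1 with h | h
      · exfalso
        apply hN (k + j)
        rw [ih.1, ← h]; congr 1; omega
      · exact h
  have hmod : ∀ k, ∃ k' < j, x k = x k' := by
    intro k
    refine ⟨k % j, Nat.mod_lt _ (by omega), ?_⟩
    induction k using Nat.strong_induction_on with
    | _ k ih =>
      rcases Nat.lt_or_ge k j with h | h
      · rw [Nat.mod_eq_of_lt h]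
      · rw [Nat.mod_eq_sub_mod h, ← ih (k - j) (by omega), ← (hper (k - j)).1]
        congr 1; omega
  have hall : ∀ a, (∃ b, Tr S v a b) → a ∈ Set.range x := by
    refine fun a ha => link_closed hS (Set.range x) ⟨0, rfl⟩ ⟨_, hA 0⟩ ?_ a ha
    rintro _ b ⟨k, rfl⟩ hb
    have hb' : Tr S v (x (k + (j - 1) + 1)) b := by
      rw [show k + (j - 1) + 1 = k + j by omega, (hper k).1]; exact hb
    rcases hU _ _ hb' with h | h <;> exact ⟨_, h.symm⟩
  have hj6 : j = 6 := by
    have h1 : (univ.filter fun a => a ∈ nbrSet S v) = (range j).image x := by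
      ext a
      simp only [mem_filter, mem_univ, true_and, mem_image, mem_range, mem_nbrSet_iff hS]
      constructor
      · intro h
        obtain ⟨k, rfl⟩ := hall a h
        obtain ⟨k', hk', h⟩ := hmod k
        exact ⟨k', hk', h.symm⟩
      · rintro ⟨k, -, rfl⟩
        exact ⟨_, hA k⟩
    have h2 := card_nbr hS v
    rw [h1, card_image_of_injOn, card_range] at h2
    · exact h2
    · intro a ha b hb hab
      simp only [coe_range, Set.mem_Iio] at ha hb
      exact hinj a b ha hb hab
  subst hj6
  refine ⟨fun k => (hper k).1, hinj, fun a b hab => ?_⟩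
  obtain ⟨k, rfl⟩ := hall a ⟨b, hab⟩
  exact ⟨k, rfl⟩

end Surf

/-! ### Developing maps -/

section Develop

variable {V : Type*} [DecidableEq V]

/-- A developing map: a locally injective simplicial map from the triangular lattice. -/
structure Dev (S : Finset (Finset V)) (φ : ℤ × ℤ → V) : Prop where
  mem : ∀ z i, Tr S (φ z) (φ (z + hx i)) (φ (z + hx (i + 1)))
  ne : ∀ z i, φ (z + hx i) ≠ φ (z + hx (i + 2))

variable {S : Finset (Finset V)} {φ ψ : ℤ × ℤ → V}

lemma Dev.cycle [Fintype V] (hS : Surf6 S) (h : Dev S φ) (z : ℤ × ℤ) :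
    (∀ i j, φ (z + hx i) = φ (z + hx j) → i = j) ∧
    (∀ a b, Tr S (φ z) a b → ∃ i, a = φ (z + hx i)) := by
  obtain ⟨-, h2, h3⟩ := six_cycle hS (φ z) (fun k => φ (z + hx (k : ZMod 6)))
    (fun i => by have := h.mem z (i : ZMod 6); push_cast; exact this)
    (fun i => by have := h.ne z (i : ZMod 6); push_cast; exact this)
  refine ⟨fun i j hij => ?_, fun a b hab => ?_⟩
  · have := h2 i.val j.val (ZMod.val_lt i) (ZMod.val_lt j) (by
      simpa only [ZMod.natCast_zmod_val] using hij)
    exact ZMod.val_injective 6 this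
  · obtain ⟨i, hi⟩ := h3 a b hab
    exact ⟨_, hi⟩

lemma Dev.link [Fintype V] (hS : Surf6 S) (h : Dev S φ) (z : ℤ × ℤ) {a b : V}
    (hab : Tr S (φ z) a b) : ∃ i, a = φ (z + hx i) ∧
      (b = φ (z + hx (i + 1)) ∨ b = φ (z + hx (i - 1))) := by
  obtain ⟨i, rfl⟩ := (h.cycle hS z).2 a b hab
  refine ⟨i, rfl, ?_⟩
  by_contra! hcon
  have h1 := h.mem z i
  have h2 := (h.mem z (i - 1)).s23
  rw [sub_add_cancel] at h2
  have hne := h.ne z (i - 1)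
  rw [show i - 1 + 2 = i + 1 by ring] at hne
  exact hcon.2 (opp_uniq hS h1 hab h2 hcon.1 hne)

lemma Dev.inj [Fintype V] (hS : Surf6 S) (h : Dev S φ) (z w : ℤ × ℤ) (hs : HexSmall (z - w))
    (he : φ z = φ w) : z = w := by
  rcases small_cases _ hs with h0 | ⟨i, hi⟩ | ⟨i, j, hij⟩
  · exact sub_eq_zero.1 h0
  · exfalso
    have hz : z = w + hx i := by rw [← hi]; abel
    rw [hz] at he
    exact ((h.mem w i).ne hS).1 he.symm
  · have hz : z = (w - hx j) + hx i := by
      have : z = (z - w) + w := by abel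
      rw [this, hij]; abel
    have := (h.cycle hS (w - hx j)).1 i j (by rw [← hz, he, sub_add_cancel])
    rw [this, sub_self] at hij
    exact sub_eq_zero.1 hij

lemma Dev.surj [Fintype V] (hS : Surf6 S) (h : Dev S φ) : Function.Surjective φ := by
  intro y
  refine skel_closed hS (Set.range φ) ⟨0, rfl⟩ ?_ y
  rintro _ b c ⟨z, rfl⟩ hb
  obtain ⟨i, rfl, -⟩ := h.link hS z hb
  exact ⟨_, rfl⟩

lemma Dev.affine (h : Dev S φ) (w : ℤ × ℤ) (d : DihedralGroup 6) :
    Dev S (fun u => φ (w + act d u)) := by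
  constructor
  · intro z i
    simp only [act_add, act_hx, ← add_assoc]
    rcases dp_succ d with hd | hd
    · rw [hd]; exact h.mem _ _
    · rw [hd]; have := (h.mem (w + act d z) (dp d i - 1)).s23
      rwa [sub_add_cancel] at this
  · intro z i
    simp only [act_add, act_hx, ← add_assoc]
    rcases dp_succ d with hd | hd
    · rw [show i + 2 = i + 1 + 1 by ring, hd, hd, add_assoc (dp d i), one_add_one_eq_two]
      exact h.ne _ _
    · rw [show i + 2 = i + 1 + 1 by ring, hd, hd]
      have := (h.ne (w + act d z) (dp d i - 1 - 1)).symm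
      rwa [show dp d i - 1 - 1 + 2 = dp d i by ring] at this

lemma Dev.agree (hS : Surf6 S) (h : Dev S φ) (h' : Dev S ψ) (h0 : φ 0 = ψ 0)
    (h1 : φ (hx 0) = ψ (hx 0)) (h2 : φ (hx 1) = ψ (hx 1)) : φ = ψ := by
  have key : ∀ z, ∀ i, φ z = ψ z ∧ φ (z + hx i) = ψ (z + hx i) ∧
      φ (z + hx (i + 1)) = ψ (z + hx (i + 1)) := by
    have rot : ∀ z i, (φ z = ψ z ∧ φ (z + hx i) = ψ (z + hx i) ∧
      φ (z + hx (i + 1)) = ψ (z + hx (i + 1))) → (φ z = ψ z ∧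
        φ (z + hx (i + 1)) = ψ (z + hx (i + 1)) ∧
      φ (z + hx (i + 1 + 1)) = ψ (z + hx (i + 1 + 1))) := by
      rintro z i ⟨a, b, c⟩
      refine ⟨a, c, ?_⟩
      have t1 := (h.mem z i).s23
      have t2 := h.mem z (i + 1)
      have t3 := h'.mem z (i + 1)
      have n2 := h.ne z i
      have n3 := h'.ne z i
      rw [show i + 2 = i + 1 + 1 by ring] at n2 n3
      rw [← a, ← c] at t3
      rw [← b] at n3
      exact opp_uniq hS t1 t2 t3 n2.symm n3.symm
    have rots : ∀ z i, (φ z = ψ z ∧ φ (z + hx i) = ψ (z + hx i) ∧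
      φ (z + hx (i + 1)) = ψ (z + hx (i + 1))) → ∀ k : ℕ, (φ z = ψ z ∧
        φ (z + hx (i + k)) = ψ (z + hx (i + k)) ∧
      φ (z + hx (i + k + 1)) = ψ (z + hx (i + k + 1))) := by
      intro z i hi k
      induction k with
      | zero => simpa using hi
      | succ k ih => have := rot _ _ ih; push_cast; rwa [← add_assoc]
    have rots' : ∀ z i, (φ z = ψ z ∧ φ (z + hx i) = ψ (z + hx i) ∧
      φ (z + hx (i + 1)) = ψ (z + hx (i + 1))) → ∀ j, (φ z = ψ z ∧
        φ (z + hx j) = ψ (z + hx j) ∧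
      φ (z + hx (j + 1)) = ψ (z + hx (j + 1))) := by
      intro z i hi j
      have := rots z i hi (j - i).val
      rwa [ZMod.natCast_zmod_val, add_sub_cancel] at this
    apply hx_induction
    · apply rots' 0 0
      simpa using ⟨h0, h1, h2⟩
    · intro z i hz
      obtain ⟨a, b, c⟩ := hz i
      apply rots' _ (i + 2)
      refine ⟨b, ?_, ?_⟩
      · rw [add_assoc, hx_sum]; exact c
      · rw [show i + 2 + 1 = i + 3 by ring, hx_neg, add_neg_cancel_right]; exact a
  funext z
  exact (key z 0).1

lemma Dev.loc [Fintype V] (hS : Surf6 S) (h : Dev S φ) (h' : Dev S ψ) (z w : ℤ × ℤ)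
    (he : φ z = ψ w) : ∃ d, ∀ u, φ (z + u) = ψ (w + act d u) := by
  have t := h.mem z 0
  rw [he] at t
  obtain ⟨k, hk, hk'⟩ := h'.link hS w t
  have hd : ∃ d, dp d 0 = k ∧ φ (z + hx (0 + 1)) = ψ (w + hx (dp d 1)) := by
    rcases hk' with h1 | h1
    · exact ⟨.r k, by simp [dp], by rw [h1]; congr 3; simp [dp]; ring⟩
    · exact ⟨.sr (-k), by simp [dp], by rw [h1]; congr 3; simp [dp]; ring⟩
  obtain ⟨d, rfl, hd1⟩ := hd
  refine ⟨d, fun u => ?_⟩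
  have e := Dev.agree hS (h.affine z 1) (h'.affine w d) ?_ ?_ ?_
  · have := congrFun e u
    simpa [act_one] using this
  · simp [act_zero, he]
  · simp only [act_hx]; exact hk
  · simp only [act_hx]; exact hd1

/-- Isomorphism, in terms of developing maps. -/
lemma iso_iff {n : ℕ} {S S' : Finset (Finset (Fin n))} (hS : Surf6 S) (hS' : Surf6 S')
    {φ ψ : ℤ × ℤ → Fin n} (h : Dev S φ) (h' : Dev S' ψ) :
    IsoComplex n S S' ↔
    ∃ w d, ∀ x y, φ x = φ y ↔ ψ (w + act d x) = ψ (w + act d y) := by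
  constructor
  · rintro ⟨σ, rfl⟩
    have hd : Dev (S.image fun T => T.image σ) (σ ∘ φ) := by
      refine ⟨fun z i => ?_, fun z i he => h.ne z i (σ.injective he)⟩
      unfold Tr
      rw [mem_image]
      exact ⟨_, h.mem z i, by simp [image_insert]⟩
    obtain ⟨w, hw⟩ := h'.surj hS' (σ (φ 0))
    obtain ⟨d, hd⟩ := hd.loc hS' h' 0 w hw.symm
    refine ⟨w, d, fun x y => ?_⟩
    rw [← hd, ← hd]
    simp
  · rintro ⟨w, d, hk⟩
    have h'' := h'.affine w d
    set χ := fun u => ψ (w + act d u) with hχ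
    have hk : ∀ x y, φ x = φ y ↔ χ x = χ y := hk
    have s1 := h.surj hS
    have s2 := h''.surj hS'
    let σ : Fin n → Fin n := fun a => χ (Function.surjInv s1 a)
    have hσ : ∀ z, σ (φ z) = χ z := fun z => (hk _ _).1 (Function.surjInv_eq s1 _)
    have hinj : Function.Injective σ := by
      intro a b hab
      obtain ⟨x, rfl⟩ := s1 a
      obtain ⟨y, rfl⟩ := s1 b
      rw [hσ, hσ] at hab
      exact (hk _ _).2 hab
    have hbij := Finite.injective_iff_bijective.1 hinj
    have hT : ∀ z i, ({φ z, φ (z + hx i), φ (z + hx (i + 1))} : Finset (Fin n)).image σ =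
        {χ z, χ (z + hx i), χ (z + hx (i + 1))} := by
      intro z i; simp [image_insert, hσ]
    have cov : ∀ {S : Finset (Finset (Fin n))} {φ : ℤ × ℤ → Fin n}, Surf6 S → Dev S φ →
        ∀ T ∈ S, ∃ z i, T = {φ z, φ (z + hx i), φ (z + hx (i + 1))} := by
      intro S φ hS h T hTS
      obtain ⟨a, b, c, -, -, -, rfl⟩ := card_eq_three.1 (hS.card3 T hTS)
      obtain ⟨z, rfl⟩ := h.surj hS a
      obtain ⟨i, rfl, rfl | rfl⟩ := h.link hS z hTS
      · exact ⟨z, i, rfl⟩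
      · exact ⟨z, i - 1, by rw [sub_add_cancel, pair_comm]⟩
    refine ⟨Equiv.ofBijective σ hbij, ?_⟩
    ext T
    simp only [mem_image]
    constructor
    · rintro ⟨T, hTS, rfl⟩
      obtain ⟨z, i, rfl⟩ := cov hS h T hTS
      have e := hT z i
      have m := h''.mem z i
      unfold Tr at m
      rw [← e] at m
      exact m
    · intro hTS
      obtain ⟨z, i, rfl⟩ := cov hS' h'' T hTS
      exact ⟨_, h.mem z i, hT z i⟩

section Exists

variable [Fintype V]

open Classical in
/-- A choice of an element satisfying `p`, or the default `z`. -/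
noncomputable def chooseOr (p : V → Prop) (z : V) : V :=
  if h : ∃ w, p w then h.choose else z

/-- The vertex opposite to `z` across the edge `x y`. -/
noncomputable def opp (S : Finset (Finset V)) (x y z : V) : V :=
  chooseOr (fun w => w ≠ z ∧ Tr S x y w) z

lemma opp_spec (hS : Surf6 S) {x y z : V} (h : Tr S x y z) :
    opp S x y z ≠ z ∧ Tr S x y (opp S x y z) := by
  have hh := exists_opp hS h
  unfold opp chooseOr
  rw [dif_pos hh]
  exact hh.choose_spec

lemma opp_eq (hS : Surf6 S) {x y z w : V} (h : Tr S x y z) (hw : Tr S x y w) (hne : w ≠ z) :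
    opp S x y z = w :=
  opp_uniq hS h (opp_spec hS h).2 hw (opp_spec hS h).1 hne

lemma opp_opp (hS : Surf6 S) {x y z : V} (h : Tr S x y z) : opp S x y (opp S x y z) = z :=
  opp_eq hS (opp_spec hS h).2 h (opp_spec hS h).1.symm

/-- Flags, as ordered triangles. -/
abbrev OTri (S : Finset (Finset V)) := {f : V × V × V // Tr S f.1 f.2.1 f.2.2}

/-- Exchange the first two vertices. -/
def fs0 (S : Finset (Finset V)) : Equiv.Perm (OTri S) :=
  Function.Involutive.toPerm (fun f => ⟨(f.1.2.1, f.1.1, f.1.2.2), f.2.s12⟩) (fun _ => rfl)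

/-- Exchange the last two vertices. -/
def fs1 (S : Finset (Finset V)) : Equiv.Perm (OTri S) :=
  Function.Involutive.toPerm (fun f => ⟨(f.1.1, f.1.2.2, f.1.2.1), f.2.s23⟩) (fun _ => rfl)

/-- Change the triangle. -/
noncomputable def fs2 (hS : Surf6 S) : Equiv.Perm (OTri S) :=
  Function.Involutive.toPerm
    (fun f => ⟨(f.1.1, f.1.2.1, opp S f.1.1 f.1.2.1 f.1.2.2), (opp_spec hS f.2).2⟩)
    (fun f => by
      apply Subtype.ext
      simp only [opp_opp hS f.2])

/-- Translation along the first edge. -/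
noncomputable def tX (hS : Surf6 S) : Equiv.Perm (OTri S) :=
  fs1 S * fs2 hS * fs1 S * fs2 hS * fs1 S * fs0 S

/-- Translation along the second edge. -/
noncomputable def tY (hS : Surf6 S) : Equiv.Perm (OTri S) := fs1 S * tX hS * fs1 S

lemma tX_val (hS : Surf6 S) (f : OTri S) : (tX hS f).1 =
    (f.1.2.1, opp S f.1.2.1 (opp S f.1.2.1 f.1.2.2 f.1.1) f.1.2.2,
      opp S f.1.2.1 f.1.2.2 f.1.1) := rfl

lemma tY_val (hS : Surf6 S) (f : OTri S) : (tY hS f).1 =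
    (f.1.2.2, opp S f.1.2.2 f.1.2.1 f.1.1,
      opp S f.1.2.2 (opp S f.1.2.2 f.1.2.1 f.1.1) f.1.2.1) := rfl

lemma opp_comm (S : Finset (Finset V)) (x y z : V) : opp S x y z = opp S y x z := by
  unfold opp
  congr 1
  funext w
  exact propext ⟨fun h => ⟨h.1, h.2.s12⟩, fun h => ⟨h.1, h.2.s12⟩⟩

/-- The sequence of link vertices around `c`. -/
noncomputable def linkSeq (S : Finset (Finset V)) (c a b : V) : ℕ → V × V
  | 0 => (a, b)
  | k + 1 => ((linkSeq S c a b k).2, opp S c (linkSeq S c a b k).2 (linkSeq S c a b k).1)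

lemma linkSeq_tr (hS : Surf6 S) {c a b : V} (h : Tr S c a b) (k : ℕ) :
    Tr S c (linkSeq S c a b k).1 (linkSeq S c a b k).2 := by
  induction k with
  | zero => exact h
  | succ k ih => exact (opp_spec hS ih.s23).2

/-- Four steps one way around a hexagon are two steps the other way. -/
lemma hexagon (hS : Surf6 S) {c a b : V} (h : Tr S c a b) :
    let e := opp S c b a
    let p := opp S c e b
    let f := opp S c a b
    let q := opp S c f a
    opp S c p e = q ∧ opp S c q f = p := by
  intro e p f q
  obtain ⟨x, x0, x1, hstep, hA⟩ : ∃ x : ℕ → V, x 0 = a ∧ x 1 = b ∧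
      (∀ i, x (i + 2) = opp S c (x (i + 1)) (x i)) ∧ ∀ i, Tr S c (x i) (x (i + 1)) :=
    ⟨fun k => (linkSeq S c a b k).1, rfl, rfl, fun _ => rfl, linkSeq_tr hS h⟩
  have hN : ∀ i, x i ≠ x (i + 2) := by
    intro i; rw [hstep]; exact (opp_spec hS (hA i).s23).1.symm
  obtain ⟨h6, -, -⟩ := six_cycle hS c x hA hN
  have e6 : x 6 = a := (h6 0).trans x0
  have e7 : x 7 = b := (h6 1).trans x1
  have x2 : x 2 = e := by rw [hstep, x0, x1]
  have x3 : x 3 = p := by rw [hstep, x2, x1]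
  have x4 : x 4 = opp S c p e := by rw [hstep, x3, x2]
  have x5 : x 5 = f := by
    refine (opp_eq hS h ?_ ?_).symm
    · have := (hA 5).s23; rwa [e6] at this
    · have := hN 5; rwa [e7] at this
  have x4' : x 4 = q := by
    refine (opp_eq hS ?_ ?_ ?_).symm
    · have := hA 5; rwa [e6, x5] at this
    · have := (hA 4).s23; rwa [x5] at this
    · have := hN 4; rwa [e6] at this
  refine ⟨by rw [← x4, x4'], ?_⟩
  refine opp_eq hS ?_ ?_ ?_
  · have := hA 4; rwa [x5, x4'] at this
  · have := (hA 3).s23; rwa [x3, x4'] at this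
  · have := hN 3; rwa [x3, x5] at this

lemma tXY_comm (hS : Surf6 S) : Commute (tX hS) (tY hS) := by
  ext1 f
  apply Subtype.ext
  rw [Equiv.Perm.mul_apply, Equiv.Perm.mul_apply, tX_val, tY_val, tY_val, tX_val]
  obtain ⟨⟨v, a, b⟩, hf⟩ := f
  simp only
  have hc := opp_spec hS hf.rot
  simp only at hc hf
  rw [opp_comm S b a v]
  set c := opp S a b v
  obtain ⟨h1, h2⟩ := hexagon hS hc.2.rot.rot
  rw [opp_comm S b c a, opp_comm S a c b]
  rw [h1, h2]

/-- Every surface of degree six has a developing map. -/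
lemma exists_dev (hS : Surf6 S) : ∃ φ, Dev S φ := by
  obtain ⟨v0⟩ := hS.conn.nonempty
  have : (S.filter fun T => v0 ∈ T).Nonempty := by rw [← card_pos, hS.deg]; norm_num
  obtain ⟨T, hT⟩ := this
  rw [mem_filter] at hT
  obtain ⟨a0, b0, c0, -, -, -, rfl⟩ := card_eq_three.1 (hS.card3 T hT.1)
  let f0 : OTri S := ⟨(a0, b0, c0), hT.1⟩
  let Φ : ℤ × ℤ → OTri S := fun z => (tX hS ^ z.1 * tY hS ^ z.2) f0
  have hcomm := tXY_comm hS
  have hX : ∀ x y, Φ (x + 1, y) = tX hS (Φ (x, y)) := by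
    intro x y
    simp only [Φ, ← Equiv.Perm.mul_apply, ← mul_assoc]
    rw [add_comm x 1, zpow_add, zpow_one]
  have hY : ∀ x y, Φ (x, y + 1) = tY hS (Φ (x, y)) := by
    intro x y
    simp only [Φ, ← Equiv.Perm.mul_apply, ← mul_assoc]
    rw [add_comm y 1, zpow_add, zpow_one, ← mul_assoc, (hcomm.zpow_left x).eq]
  let φ : ℤ → ℤ → V := fun x y => (Φ (x, y)).1.1
  have f1 : ∀ x y, (Φ (x, y)).1.2.1 = φ (x + 1) y := by
    intro x y; simp only [φ, hX, tX_val]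
  have f2 : ∀ x y, (Φ (x, y)).1.2.2 = φ x (y + 1) := by
    intro x y; simp only [φ, hY, tY_val]
  have T1 : ∀ x y, Tr S (φ x y) (φ (x + 1) y) (φ x (y + 1)) := by
    intro x y
    have := (Φ (x, y)).2
    rwa [f1, f2] at this
  have T2 : ∀ x y, φ (x + 1) (y + 1) = opp S (φ (x + 1) y) (φ x (y + 1)) (φ x y) := by
    intro x y
    rw [← f2 (x + 1) y, hX, tX_val]
    simp only [f1, f2]; rfl
  have T3 : ∀ x y, φ (x + 2) y = opp S (φ (x + 1) y) (φ (x + 1) (y + 1)) (φ x (y + 1)) := by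
    intro x y
    rw [show x + 2 = x + 1 + 1 by ring, ← f1 (x + 1) y, hX, tX_val, T2]
    simp only [f1, f2]; rfl
  have T4 : ∀ x y, φ x (y + 2) = opp S (φ x (y + 1)) (φ (x + 1) (y + 1)) (φ (x + 1) y) := by
    intro x y
    rw [show y + 2 = y + 1 + 1 by ring, ← f2 x (y + 1), hY, tY_val, T2, opp_comm S (φ (x + 1) y)]
    simp only [f1, f2]; rfl
  have D1 : ∀ x y, Tr S (φ (x + 1) y) (φ x (y + 1)) (φ (x + 1) (y + 1)) := by
    intro x y; rw [T2]; exact (opp_spec hS (T1 x y).rot).2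
  have N1 : ∀ x y, φ (x + 1) (y + 1) ≠ φ x y := by
    intro x y; rw [T2]; exact (opp_spec hS (T1 x y).rot).1
  have N2 : ∀ x y, φ (x + 2) y ≠ φ x (y + 1) := by
    intro x y; rw [T3]; exact (opp_spec hS (D1 x y).s23).1
  have N3 : ∀ x y, φ x (y + 2) ≠ φ (x + 1) y := by
    intro x y; rw [T4]; exact (opp_spec hS (D1 x y).rot).1
  refine ⟨fun z => φ z.1 z.2, ?_, ?_⟩
  · rintro ⟨x, y⟩ i
    have hi : i = 0 ∨ i = 1 ∨ i = 2 ∨ i = 3 ∨ i = 4 ∨ i = 5 := by revert i; decide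
    rcases hi with rfl | rfl | rfl | rfl | rfl | rfl
    · change Tr S (φ x y) (φ (x + 1) (y + 0)) (φ (x + 0) (y + 1))
      convert T1 x y using 2 <;> ring
    · change Tr S (φ x y) (φ (x + 0) (y + 1)) (φ (x + -1) (y + 1))
      convert (D1 (x - 1) y).s23 using 2 <;> ring
    · change Tr S (φ x y) (φ (x + -1) (y + 1)) (φ (x + -1) (y + 0))
      convert (T1 (x - 1) y).rot using 2 <;> ring
    · change Tr S (φ x y) (φ (x + -1) (y + 0)) (φ (x + 0) (y + -1))
      convert (D1 (x - 1) (y - 1)).s13 using 2 <;> ring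
    · change Tr S (φ x y) (φ (x + 0) (y + -1)) (φ (x + 1) (y + -1))
      convert (T1 x (y - 1)).rot.rot using 2 <;> ring
    · change Tr S (φ x y) (φ (x + 1) (y + -1)) (φ (x + 1) (y + 0))
      convert (D1 x (y - 1)).s12 using 2 <;> ring
  · rintro ⟨x, y⟩ i
    have hi : i = 0 ∨ i = 1 ∨ i = 2 ∨ i = 3 ∨ i = 4 ∨ i = 5 := by revert i; decide
    rcases hi with rfl | rfl | rfl | rfl | rfl | rfl
    · change φ (x + 1) (y + 0) ≠ φ (x + -1) (y + 1)
      convert N2 (x - 1) y using 2 <;> ring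
    · change φ (x + 0) (y + 1) ≠ φ (x + -1) (y + 0)
      convert N1 (x - 1) y using 2 <;> ring
    · change φ (x + -1) (y + 1) ≠ φ (x + 0) (y + -1)
      convert N3 (x - 1) (y - 1) using 2 <;> ring
    · change φ (x + -1) (y + 0) ≠ φ (x + 1) (y + -1)
      convert (N2 (x - 1) (y - 1)).symm using 2 <;> ring
    · change φ (x + 0) (y + -1) ≠ φ (x + 1) (y + 0)
      convert (N1 x (y - 1)).symm using 2 <;> ring
    · change φ (x + 1) (y + -1) ≠ φ (x + 0) (y + 1)
      convert (N3 x (y - 1)).symm using 2 <;> ring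

end Exists

end Develop

/-! ### Quotients of the triangular lattice -/

section Quot

variable {V : Type*} [DecidableEq V]

/-- Maps from the lattice whose fibers define a quotient surface. -/
structure Good (φ : ℤ × ℤ → V) : Prop where
  surj : Function.Surjective φ
  inj : ∀ z w, HexSmall (z - w) → φ z = φ w → z = w
  loc : ∀ z w, φ z = φ w → ∃ d, ∀ u, φ (z + u) = φ (w + act d u)

lemma Dev.good [Fintype V] {S : Finset (Finset V)} (hS : Surf6 S) {φ : ℤ × ℤ → V}
    (h : Dev S φ) : Good φ := ⟨h.surj hS, h.inj hS, h.loc hS h⟩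

/-- The image of a lattice triangle. -/
def tri (φ : ℤ × ℤ → V) (z : ℤ × ℤ) (i : ZMod 6) : Finset V :=
  {φ z, φ (z + hx i), φ (z + hx (i + 1))}

open Classical in
/-- The image of the triangulation of the plane. -/
noncomputable def quotS [Fintype V] (φ : ℤ × ℤ → V) : Finset (Finset V) :=
  univ.filter fun T => ∃ z i, T = tri φ z i

variable [Fintype V] {φ : ℤ × ℤ → V}

lemma mem_quotS {T : Finset V} : T ∈ quotS φ ↔ ∃ z i, T = tri φ z i := by
  simp [quotS]

lemma Good.star (h : Good φ) (z : ℤ × ℤ) (i j : ZMod 6) (he : φ (z + hx i) = φ (z + hx j)) :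
    i = j := by
  have := h.inj _ _ (by rw [add_sub_add_left_eq_sub]; exact small_hx_sub i j) he
  exact hx_inj _ _ (add_left_cancel this)

lemma Good.star0 (h : Good φ) (z : ℤ × ℤ) (i : ZMod 6) : φ z ≠ φ (z + hx i) := by
  intro he
  have := h.inj _ _ (by rw [add_sub_cancel_left]; exact small_hx i) he.symm
  exact hx_ne_zero i (by simpa using this)

lemma tri_shift (φ : ℤ × ℤ → V) (z : ℤ × ℤ) (i : ZMod 6) :
    tri φ z i = tri φ (z + hx i) (i + 2) := by
  unfold tri
  rw [add_assoc, hx_sum, show i + 2 + 1 = i + 3 by ring, hx_neg, add_assoc, add_neg_cancel, add_zero]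
  ext a; simp only [mem_insert, mem_singleton]; tauto

lemma Good.tri_at (h : Good φ) {T : Finset V} (hT : T ∈ quotS φ) (z : ℤ × ℤ) (hz : φ z ∈ T) :
    ∃ i, T = tri φ z i := by
  have main : ∀ w j, T = tri φ w j → φ w = φ z → ∃ i, T = tri φ z i := by
    rintro w j rfl hw
    obtain ⟨d, hd⟩ := h.loc w z hw
    have e : tri φ w j = {φ z, φ (z + hx (dp d j)), φ (z + hx (dp d (j + 1)))} := by
      unfold tri; rw [hd, hd, hw, act_hx, act_hx]
    rw [e]
    rcases dp_succ d with h1 | h1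
    · exact ⟨dp d j, by rw [h1]; rfl⟩
    · refine ⟨dp d j - 1, ?_⟩
      rw [h1]; unfold tri; rw [sub_add_cancel, pair_comm]
  obtain ⟨w, j, hw⟩ := mem_quotS.1 hT
  have hz' := hz
  rw [hw, tri, mem_insert, mem_insert, mem_singleton] at hz'
  rcases hz' with h1 | h1 | h1
  · exact main w j hw h1.symm
  · exact main _ _ (hw.trans (tri_shift φ w j)) h1.symm
  · refine main _ _ ((hw.trans (tri_shift φ w j)).trans (tri_shift φ _ _)) ?_
    rw [add_assoc, hx_sum, h1]

lemma zmod6_ne1 : ∀ i : ZMod 6, i ≠ i + 1 := by decide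
lemma zmod6_ne2 : ∀ i : ZMod 6, i ≠ i + 2 := by decide
lemma zmod6_ne3 : ∀ i : ZMod 6, i ≠ i - 1 := by decide

lemma zmod6_aux : ∀ i j : ZMod 6, (i = j ∨ i = j + 1) → (i + 1 = j ∨ i + 1 = j + 1) → i = j := by
  decide

lemma Good.mem_tri (h : Good φ) (z : ℤ × ℤ) (i j : ZMod 6) :
    φ (z + hx i) ∈ tri φ z j ↔ i = j ∨ i = j + 1 := by
  unfold tri
  simp only [mem_insert, mem_singleton]
  constructor
  · rintro (h1 | h1 | h1)
    · exact absurd h1.symm (h.star0 z i)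
    · exact .inl (h.star _ _ _ h1)
    · exact .inr (h.star _ _ _ h1)
  · rintro (rfl | rfl) <;> simp

lemma Good.tri_inj (h : Good φ) (z : ℤ × ℤ) : Function.Injective (tri φ z) := by
  intro i j he
  refine zmod6_aux i j ((h.mem_tri z i j).1 ?_) ((h.mem_tri z (i + 1) j).1 ?_)
  · rw [← he, h.mem_tri]; simp
  · rw [← he, h.mem_tri]; simp

lemma Good.dev (h : Good φ) : Dev (quotS φ) φ :=
  ⟨fun z i => mem_quotS.2 ⟨z, i, rfl⟩, fun z i he => by
    have := h.star z _ _ he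
    exact zmod6_ne2 _ this⟩

lemma Good.card3 (h : Good φ) : ∀ T ∈ quotS φ, T.card = 3 := by
  intro T hT
  obtain ⟨z, i, rfl⟩ := mem_quotS.1 hT
  refine card_eq_three.2 ⟨_, _, _, h.star0 z i, h.star0 z (i + 1), fun he => ?_, rfl⟩
  have := h.star z _ _ he
  exact zmod6_ne1 _ this

lemma Good.surf (h : Good φ) : Surf6 (quotS φ) := by
  refine ⟨h.card3, ?_, ?_, ?_, ?_⟩
  · rintro e he ⟨T, hT, heT⟩
    obtain ⟨a, b, hab, rfl⟩ := card_eq_two.1 he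
    obtain ⟨z, rfl⟩ := h.surj a
    obtain ⟨i, rfl⟩ := h.tri_at hT z (heT (by simp))
    have hb : ∃ k, b = φ (z + hx k) := by
      have : b ∈ tri φ z i := heT (by simp)
      simp only [tri, mem_insert, mem_singleton] at this
      rcases this with h1 | h1 | h1
      · exact absurd h1.symm hab
      · exact ⟨_, h1⟩
      · exact ⟨_, h1⟩
    obtain ⟨k, rfl⟩ := hb
    refine card_eq_two.2 ⟨tri φ z k, tri φ z (k - 1), fun he => ?_, ?_⟩
    · have := h.tri_inj z he
      exact zmod6_ne3 _ this
    · ext T'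
      simp only [mem_filter, insert_subset_iff, singleton_subset_iff, mem_insert, mem_singleton]
      constructor
      · rintro ⟨h1, h2, h3⟩
        obtain ⟨j, rfl⟩ := h.tri_at h1 z h2
        rcases (h.mem_tri z k j).1 h3 with rfl | rfl
        · exact .inl rfl
        · right; rw [add_sub_cancel_right]
      · rintro (rfl | rfl)
        · exact ⟨mem_quotS.2 ⟨_, _, rfl⟩, by simp [tri], (h.mem_tri _ _ _).2 (.inl rfl)⟩
        · exact ⟨mem_quotS.2 ⟨_, _, rfl⟩, by simp [tri], (h.mem_tri _ _ _).2 (.inr (by ring))⟩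
  · intro v
    obtain ⟨z, rfl⟩ := h.surj v
    have hm : ∀ i, φ (z + hx i) ∈ nbrSet (quotS φ) (φ z) := fun i =>
      ⟨(h.star0 z i).symm, tri φ z i, mem_quotS.2 ⟨_, _, rfl⟩, by simp [tri], by simp [tri]⟩
    have hr : ∀ k : ℕ, ((linkGraph (quotS φ) (φ z)).induce (nbrSet (quotS φ) (φ z))).Reachable
        ⟨_, hm 0⟩ ⟨_, hm (k : ZMod 6)⟩ := by
      intro k
      induction k with
      | zero => simp
      | succ k ih =>
        refine ih.trans (SimpleGraph.Adj.reachable ?_)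
        refine ⟨fun he => ?_, mem_quotS.2 ⟨z, k, ?_⟩⟩
        · have := h.star z _ _ he
          push_cast at this
          exact zmod6_ne1 _ this
        · simp [tri]
    have hr' : ∀ a, ((linkGraph (quotS φ) (φ z)).induce (nbrSet (quotS φ) (φ z))).Reachable
        ⟨_, hm 0⟩ a := by
      rintro ⟨a, ha⟩
      obtain ⟨hne, T, hT, h1, h2⟩ := ha
      obtain ⟨i, rfl⟩ := h.tri_at hT z h1
      have hb : ∃ k, a = φ (z + hx k) := by
        simp only [tri, mem_insert, mem_singleton] at h2
        rcases h2 with h1 | h1 | h1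
        · exact absurd h1 hne
        · exact ⟨_, h1⟩
        · exact ⟨_, h1⟩
      obtain ⟨k, rfl⟩ := hb
      have := hr k.val
      simpa only [ZMod.natCast_zmod_val] using this
    have : Nonempty (nbrSet (quotS φ) (φ z)) := ⟨⟨_, hm 0⟩⟩
    exact ⟨fun a b => (hr' a).symm.trans (hr' b)⟩
  · have hr : ∀ z, (skeletonGraph (quotS φ)).Reachable (φ 0) (φ z) := by
      apply hx_induction
      · exact SimpleGraph.Reachable.refl _
      · intro z i hz
        refine hz.trans (SimpleGraph.Adj.reachable ⟨h.star0 z i, tri φ z i,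
          mem_quotS.2 ⟨_, _, rfl⟩, by simp [tri], by simp [tri]⟩)
    have : Nonempty V := ⟨φ 0⟩
    refine ⟨fun a b => ?_⟩
    obtain ⟨x, rfl⟩ := h.surj a
    obtain ⟨y, rfl⟩ := h.surj b
    exact (hr x).symm.trans (hr y)
  · intro v
    obtain ⟨z, rfl⟩ := h.surj v
    have : ((quotS φ).filter fun T => φ z ∈ T) = univ.image (tri φ z) := by
      ext T
      simp only [mem_filter, mem_image, mem_univ, true_and]
      constructor
      · rintro ⟨h1, h2⟩
        obtain ⟨i, rfl⟩ := h.tri_at h1 z h2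
        exact ⟨i, rfl⟩
      · rintro ⟨i, rfl⟩
        exact ⟨mem_quotS.2 ⟨_, _, rfl⟩, by simp [tri]⟩
    rw [this, card_image_of_injective _ (h.tri_inj z)]
    rfl

end Quot

/-! ### Orientability -/

section Orient

variable {V : Type*} [DecidableEq V]

lemma tri_or {p q r v a b : V} (he : ({p, q, r} : Finset V) = {v, a, b})
    (h1 : v ≠ a) (h2 : v ≠ b) (h3 : a ≠ b) :
    ((v, a) ∈ dirEdges (p, q, r) ↔ (a, b) ∈ dirEdges (p, q, r)) ∧
    ((v, a) ∈ dirEdges (p, q, r) ↔ (v, b) ∉ dirEdges (p, q, r)) ∧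
    ((v, a) ∈ dirEdges (p, q, r) ↔ (a, v) ∉ dirEdges (p, q, r)) := by
  have e : ∀ x, (x = p ∨ x = q ∨ x = r) ↔ (x = v ∨ x = a ∨ x = b) := fun x => by
    have := congrArg (fun s => x ∈ s) he
    simpa using this
  have hp := (e p).1 (by simp)
  have hq := (e q).1 (by simp)
  have hr := (e r).1 (by simp)
  have hv := (e v).2 (by simp)
  have ha := (e a).2 (by simp)
  have hb := (e b).2 (by simp)
  clear e he
  simp only [dirEdges, mem_insert, mem_singleton, Prod.mk.injEq]
  rcases hp with rfl | rfl | rfl <;> rcases hq with rfl | rfl | rfl <;>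
    rcases hr with rfl | rfl | rfl <;> simp_all [eq_comm]

/-- All deck transformations are rotations. -/
def OnlyRot (φ : ℤ × ℤ → V) : Prop :=
  ∀ w d, (∀ u, φ (w + act d u) = φ u) → ∃ i, d = DihedralGroup.r i

variable [Fintype V] {φ : ℤ × ℤ → V}

lemma Good.ne12 (h : Good φ) (z : ℤ × ℤ) (i : ZMod 6) :
    φ (z + hx i) ≠ φ (z + hx (i + 1)) := fun he => zmod6_ne1 _ (h.star _ _ _ he)

lemma Dev.eq_quotS {S : Finset (Finset V)} (hS : Surf6 S) (h : Dev S φ) : S = quotS φ := by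
  ext T
  rw [mem_quotS]
  constructor
  · intro hT
    obtain ⟨x, y, z, -, -, -, rfl⟩ := card_eq_three.1 (hS.card3 T hT)
    obtain ⟨w, rfl⟩ := h.surj hS x
    obtain ⟨i, rfl, rfl | rfl⟩ := h.link hS w (a := y) (b := z) hT
    · exact ⟨w, i, rfl⟩
    · exact ⟨w, i - 1, by unfold tri; rw [sub_add_cancel, pair_comm]⟩
  · rintro ⟨z, i, rfl⟩
    exact h.mem z i

lemma Good.onlyRot_of_orient (h : Good φ) (ho : IsOrientable (quotS φ)) : OnlyRot φ := by
  obtain ⟨o, o1, o2⟩ := ho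
  set D : ℤ × ℤ → ZMod 6 → Finset (V × V) := fun z i => dirEdges (o (tri φ z i)) with hD
  have hm : ∀ z i, tri φ z i ∈ quotS φ := fun z i => mem_quotS.2 ⟨z, i, rfl⟩
  have key := fun z i => tri_or (o1 _ (hm z i)) (h.star0 z i) (h.star0 z (i + 1)) (h.ne12 z i)
  set P : ℤ × ℤ → ZMod 6 → Prop := fun z i => (φ z, φ (z + hx i)) ∈ D z i with hP
  have s1 : ∀ z i, P z i → P z (i + 1) := by
    intro z i hp
    refine o2 _ (hm z i) _ (hm z (i + 1)) (fun he => zmod6_ne1 _ (h.tri_inj z he)) _ _ ?_ ?_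
    · have h1 := (key z i).2.1.1 hp
      have := tri_or (p := (o (tri φ z i)).1) (q := (o (tri φ z i)).2.1)
        (r := (o (tri φ z i)).2.2) (v := φ z) (a := φ (z + hx (i + 1))) (b := φ (z + hx i))
        (by rw [o1 _ (hm z i), tri, pair_comm]) (h.star0 z (i + 1)) (h.star0 z i) (h.ne12 z i).symm
      by_contra hc
      exact h1 (this.2.2.2 hc)
    · intro x hx'
      simp only [tri, mem_insert, mem_singleton] at hx' ⊢
      tauto
  have s1' : ∀ z i, P z i → ∀ j, P z j := by
    intro z i hp
    have : ∀ k : ℕ, P z (i + k) := by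
      intro k
      induction k with
      | zero => simpa using hp
      | succ k ih => have := s1 z _ ih; push_cast; rwa [← add_assoc]
    intro j
    have := this (j - i).val
    rwa [ZMod.natCast_zmod_val, add_sub_cancel] at this
  have s2 : ∀ z i, P z i → P (z + hx i) (i + 2) := by
    intro z i hp
    have := (key z i).1.1 hp
    simp only [hP, hD]
    rw [← tri_shift, add_assoc, hx_sum]
    exact this
  have s3 : ∀ u, ∀ z i, P z i → ∀ j, P (z + u) j := by
    apply hx_induction
    · intro z i hp j; rw [add_zero]; exact s1' z i hp j
    · intro u k ih z i hp j
      have := s2 _ _ (ih z i hp k)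
      rw [← add_assoc]
      exact s1' _ _ this j
  intro w d hd
  rcases d with i | i
  · exact ⟨i, rfl⟩
  exfalso
  set d := DihedralGroup.sr i
  have hdp : dp d 1 + 1 = dp d 0 := by simp only [d, dp]; ring
  have e0 : φ w = φ 0 := by have := hd 0; rwa [act_zero, add_zero] at this
  have e1 : φ (w + hx (dp d 1)) = φ (0 + hx 1) := by rw [← act_hx, hd, zero_add]
  have e2 : φ (w + hx (dp d 0)) = φ (0 + hx 0) := by rw [← act_hx, hd, zero_add]
  have et : tri φ w (dp d 1) = tri φ 0 0 := by
    unfold tri; rw [hdp, e0, e1, e2, pair_comm]; rfl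
  have h2 : P w (dp d 1) ↔ (φ 0, φ (0 + hx (0 + 1))) ∈ D 0 0 := by
    simp only [hP, hD]; rw [et, e0, e1]; rfl
  have h3 := (key 0 0).2.1
  by_cases hp : P 0 0
  · have := s3 w 0 0 hp (dp d 1)
    rw [zero_add] at this
    exact h3.1 hp (h2.1 this)
  · have h4 : P w (dp d 1) := h2.2 (by by_contra hc; exact hp (h3.2 hc))
    have := s3 (-w) w _ h4 0
    rw [add_neg_cancel] at this
    exact hp this

lemma Good.orient_of_onlyRot (h : Good φ) (hr : OnlyRot φ) : IsOrientable (quotS φ) := by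
  classical
  have hch : ∀ T : Finset V, ∃ t : V × V × V, T ∈ quotS φ → ∃ z i, T = tri φ z i ∧
      t = (φ z, φ (z + hx i), φ (z + hx (i + 1))) := by
    intro T
    by_cases hT : T ∈ quotS φ
    · obtain ⟨z, i, hz⟩ := mem_quotS.1 hT
      exact ⟨_, fun _ => ⟨z, i, hz, rfl⟩⟩
    · exact ⟨(φ 0, φ 0, φ 0), fun h' => absurd h' hT⟩
  choose o ho using hch
  have c1 : ∀ T ∈ quotS φ, ∀ x y, (x, y) ∈ dirEdges (o T) →
      ∃ z i, T = tri φ z i ∧ x = φ z ∧ y = φ (z + hx i) := by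
    intro T hT x y hxy
    obtain ⟨z, i, h1, h2⟩ := ho T hT
    have t1 := tri_shift φ z i
    have t2 := tri_shift φ (z + hx i) (i + 2)
    rw [add_assoc, hx_sum, show i + 2 + 2 = i + 4 by ring] at t2
    rw [h2] at hxy
    simp only [dirEdges, mem_insert, mem_singleton, Prod.mk.injEq] at hxy
    rcases hxy with ⟨rfl, rfl⟩ | ⟨rfl, rfl⟩ | ⟨rfl, rfl⟩
    · exact ⟨z, i, h1, rfl, rfl⟩
    · exact ⟨_, _, h1.trans t1, rfl, by rw [add_assoc, hx_sum]⟩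
    · refine ⟨_, _, (h1.trans t1).trans t2, rfl, ?_⟩
      rw [show i + 4 = i + 1 + 3 by ring, hx_neg, add_assoc, add_neg_cancel, add_zero]
  have c2 : ∀ T ∈ quotS φ, ({(o T).1, (o T).2.1, (o T).2.2} : Finset V) = T := by
    intro T hT
    obtain ⟨z, i, h1, h2⟩ := ho T hT
    rw [h2, h1]; rfl
  refine ⟨o, c2, ?_⟩
  intro T hT T' hT' hne x y hxy hsub
  by_contra hcon
  obtain ⟨z, i, h1, rfl, rfl⟩ := c1 T hT x y hxy
  obtain ⟨k, h2⟩ := h.tri_at hT' z (hsub (by simp))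
  have hxy' : (φ z, φ (z + hx i)) ∈ dirEdges (o T') := by
    have hm : φ (z + hx i) ∈ tri φ z k := h2 ▸ hsub (by simp)
    rcases (h.mem_tri z i k).1 hm with rfl | rfl
    · have := (tri_or (p := (o T').1) (q := (o T').2.1) (r := (o T').2.2)
        ((c2 T' hT').trans h2) (h.star0 z i) (h.star0 z (i + 1)) (h.ne12 z i)).2.2
      exact this.2 hcon
    · have := (tri_or (p := (o T').1) (q := (o T').2.1) (r := (o T').2.2)
        (v := φ z) (a := φ (z + hx (k + 1))) (b := φ (z + hx k))
        (by rw [c2 T' hT', h2, tri, pair_comm]) (h.star0 z _) (h.star0 z _) (h.ne12 z k).symm).2.2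
      exact this.2 hcon
  obtain ⟨w, j, h3, h4, h5⟩ := c1 T' hT' _ _ hxy'
  obtain ⟨d, hd⟩ := h.loc z w h4
  obtain ⟨m, rfl⟩ := hr (w - act d z) d (fun u => by
    have := hd (u - z)
    rw [act_sub] at this
    rw [add_sub_cancel] at this
    rw [this]; congr 1; abel)
  have e5 := hd (hx i)
  rw [act_hx, h5] at e5
  have e6 := h.star _ _ _ e5
  apply hne
  rw [h1, h3]
  unfold tri
  rw [← h4, ← h5, hd (hx (i + 1)), act_hx, e6]
  simp only [dp]
  rw [show i + 1 + m = i + m + 1 by ring]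

lemma Good.orient_iff (h : Good φ) : IsOrientable (quotS φ) ↔ OnlyRot φ :=
  ⟨h.onlyRot_of_orient, h.orient_of_onlyRot⟩

lemma act_eq (g : DihedralGroup 6) (x y : ℤ) : act g (x, y) =
    (x * (hx (dp g 0)).1 + y * (hx (dp g 1)).1, x * (hx (dp g 0)).2 + y * (hx (dp g 1)).2) := by
  simp [act, Prod.ext_iff]

lemma act_of {g : DihedralGroup 6} {p q r s : ℤ} (h1 : hx (dp g 0) = (p, q))
    (h2 : hx (dp g 1) = (r, s)) (x y : ℤ) : act g (x, y) = (x * p + y * r, x * q + y * s) := by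
  rw [act_eq, h1, h2]

lemma rot_small : ∀ (i : ZMod 6), i ≠ 0 → ∀ (w : ℤ × ℤ),
    ∃ z, HexSmall (w + act (.r i) z - z) := by
  have hs : ∀ x y : ℤ, 0 ≤ x → x ≤ 2 → 0 ≤ y → y ≤ 2 → x + y ≤ 2 → HexSmall (x, y) := by
    intro x y h1 h2 h3 h4 h5
    refine ⟨?_, ?_, ?_⟩ <;> rw [abs_le] <;> constructor <;> simp only <;> omega
  intro i hi w
  obtain ⟨a, b⟩ := w
  have h6 : i = 1 ∨ i = 2 ∨ i = 3 ∨ i = 4 ∨ i = 5 := by revert i; decide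
  rcases h6 with rfl | rfl | rfl | rfl | rfl
  · refine ⟨(-b, a + b), ?_⟩
    rw [act_of (p := 0) (q := 1) (r := -1) (s := 1) (by decide) (by decide),
      Prod.mk_add_mk, Prod.mk_sub_mk]
    apply hs <;> omega
  · refine ⟨((a - b) / 3, (a - b) / 3 + b), ?_⟩
    rw [act_of (p := -1) (q := 1) (r := -1) (s := 0) (by decide) (by decide),
      Prod.mk_add_mk, Prod.mk_sub_mk]
    apply hs <;> omega
  · refine ⟨(a / 2, b / 2), ?_⟩
    rw [act_of (p := -1) (q := 0) (r := 0) (s := -1) (by decide) (by decide),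
      Prod.mk_add_mk, Prod.mk_sub_mk]
    apply hs <;> omega
  · refine ⟨((b - a) / 3 + a, (b - a) / 3), ?_⟩
    rw [act_of (p := 0) (q := -1) (r := 1) (s := -1) (by decide) (by decide),
      Prod.mk_add_mk, Prod.mk_sub_mk]
    apply hs <;> omega
  · refine ⟨(a + b, -a), ?_⟩
    rw [act_of (p := 1) (q := -1) (r := 1) (s := 0) (by decide) (by decide),
      Prod.mk_add_mk, Prod.mk_sub_mk]
    apply hs <;> omega

lemma Good.no_rot (h : Good φ) {w : ℤ × ℤ} {i : ZMod 6}
    (hd : ∀ u, φ (w + act (.r i) u) = φ u) : i = 0 := by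
  by_contra hi
  obtain ⟨z, hz⟩ := rot_small i hi w
  have e := h.inj _ _ hz (hd z)
  have := hd (z + hx 0)
  rw [act_add, ← add_assoc, e, act_hx] at this
  have := h.star _ _ _ this
  simp only [dp] at this
  exact hi (by simpa using this)

/-- The lattice of translations. -/
def trL (φ : ℤ × ℤ → V) : AddSubgroup (ℤ × ℤ) where
  carrier := {t | ∀ z, φ (z + t) = φ z}
  zero_mem' := fun z => by rw [add_zero]
  add_mem' := fun {a b} ha hb z => by rw [← add_assoc, hb, ha]
  neg_mem' := fun {a} ha z => by rw [← ha (z + -a), neg_add_cancel_right]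

lemma mem_trL {t : ℤ × ℤ} : t ∈ trL φ ↔ ∀ z, φ (z + t) = φ z := Iff.rfl

lemma Good.loc' (h : Good φ) {z w : ℤ × ℤ} (he : φ z = φ w) :
    ∃ d, (∀ u, φ (w - act d z + act d u) = φ u) := by
  obtain ⟨d, hd⟩ := h.loc z w he
  refine ⟨d, fun u => ?_⟩
  have := hd (u - z)
  rw [act_sub, add_sub_cancel] at this
  rw [this]; congr 1; abel

lemma Good.eq_iff (h : Good φ) (hr : OnlyRot φ) (z w : ℤ × ℤ) : φ z = φ w ↔ z - w ∈ trL φ := by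
  constructor
  · intro he
    obtain ⟨d, hd⟩ := h.loc' he
    obtain ⟨i, rfl⟩ := hr _ _ hd
    have := h.no_rot hd
    subst this
    rw [← neg_mem_iff, neg_sub, mem_trL]
    intro u
    have := hd u
    rw [show DihedralGroup.r (0 : ZMod 6) = 1 from rfl, act_one, act_one] at this
    rw [← this]; congr 1; abel
  · intro hm
    have := hm w
    rwa [add_sub_cancel] at this

lemma Good.trL_good (h : Good φ) {u : ℤ × ℤ} (hu : u ∈ trL φ) (hs : HexSmall u) : u = 0 := by
  have := hu 0
  rw [zero_add] at this
  exact h.inj u 0 (by simpa using hs) this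

end Orient

/-! ### Counting classes -/

section Classes

variable {n : ℕ}

/-- Equivalence of two quotient maps. -/
def Equi (φ ψ : ℤ × ℤ → Fin n) : Prop :=
  ∃ w d, ∀ x y, φ x = φ y ↔ ψ (w + act d x) = ψ (w + act d y)

lemma isoComplex_equivalence (n : ℕ) : Equivalence (IsoComplex n) := by
  refine ⟨fun S => ⟨1, ?_⟩, ?_, ?_⟩
  · ext T; simp
  · rintro S S' ⟨σ, rfl⟩
    refine ⟨σ⁻¹, ?_⟩
    rw [image_image]
    convert image_id (s := S)
    simp [image_image, Function.comp_def]
    rfl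
  · rintro S S' S'' ⟨σ, rfl⟩ ⟨τ, rfl⟩
    refine ⟨τ * σ, ?_⟩
    simp [image_image, Function.comp_def]

lemma numClasses_eq {X : Type*} (P : Finset (Finset (Fin n)) → Prop)
    (F : X → Finset (Finset (Fin n)))
    (hF : ∀ x, P (F x)) (hsurj : ∀ S, P S → ∃ x, IsoComplex n S (F x)) (r : Setoid X)
    (hr : ∀ x y, IsoComplex n (F x) (F y) ↔ r x y) :
    numClasses n P = Nat.card (Quotient r) := by
  unfold numClasses
  have he : Equivalence (fun A B : {S : Finset (Finset (Fin n)) // P S} => IsoComplex n A.1 B.1) :=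
    ⟨fun a => (isoComplex_equivalence n).refl a.1, fun h => (isoComplex_equivalence n).symm h,
      fun h h' => (isoComplex_equivalence n).trans h h'⟩
  symm
  refine Nat.card_eq_of_bijective
    (Quotient.lift (fun x => Quot.mk _ ⟨F x, hF x⟩) fun a b hab => Quot.sound ((hr a b).2 hab)) ?_
  constructor
  · intro a b
    induction a using Quotient.inductionOn with | _ a
    induction b using Quotient.inductionOn with | _ b
    intro hab
    have := Quot.eqvGen_exact hab
    rw [he.eqvGen_iff] at this
    exact Quotient.sound ((hr a b).1 this)
  · intro S
    induction S using Quot.inductionOn with | _ S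
    obtain ⟨x, hx⟩ := hsurj S.1 S.2
    exact ⟨Quotient.mk _ x, Quot.sound ((isoComplex_equivalence n).symm hx)⟩

lemma numClasses_good {X : Type*} (O : Finset (Finset (Fin n)) → Prop)
    (Φ : X → ℤ × ℤ → Fin n) (hΦ : ∀ x, Good (Φ x)) (hO : ∀ x, O (quotS (Φ x)))
    (hsurj : ∀ φ : ℤ × ℤ → Fin n, Good φ → O (quotS φ) → ∃ x, Equi φ (Φ x)) (r : Setoid X)
    (hr : ∀ x y, Equi (Φ x) (Φ y) ↔ r x y) :
    numClasses n (fun S => IsCombSurface n S ∧ IsEquivelar n S ∧ O S ∧ eulerChar n S = 0) =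
      Nat.card (Quotient r) := by
  refine numClasses_eq _ (fun x => quotS (Φ x)) ?_ ?_ r ?_
  · intro x
    obtain ⟨h1, h2, h3⟩ := (hΦ x).surf.euler
    exact ⟨h1, h2, hO x, h3⟩
  · rintro S ⟨h1, h2, h3, h4⟩
    have hS := surf6_of n S h1 h2 h4
    obtain ⟨φ, hφ⟩ := exists_dev hS
    have e := hφ.eq_quotS hS
    obtain ⟨x, hx⟩ := hsurj φ (hφ.good hS) (e ▸ h3)
    exact ⟨x, (iso_iff hS (hΦ x).surf hφ (hΦ x).dev).2 hx⟩
  · intro x y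
    rw [← hr]
    exact iso_iff (hΦ x).surf (hΦ y).surf (hΦ x).dev (hΦ y).dev

end Classes

/-! ### The torus -/

section Torus

open Pointwise

/-- Lattices with small vectors excluded. -/
def TL (n : ℕ) := {L : AddSubgroup (ℤ × ℤ) // L.index = n ∧ ∀ u ∈ L, HexSmall u → u = 0}

lemma mem_smul_L (g : DihedralGroup 6) (L : AddSubgroup (ℤ × ℤ)) (u : ℤ × ℤ) :
    u ∈ g • L ↔ act g⁻¹ u ∈ L := by
  rw [AddSubgroup.mem_pointwise_smul_iff_inv_smul_mem]; rfl

lemma act_mem_smul_L (g : DihedralGroup 6) (L : AddSubgroup (ℤ × ℤ)) (u : ℤ × ℤ) :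
    act g u ∈ g • L ↔ u ∈ L := by
  rw [mem_smul_L, act_inv_act]

lemma index_smul_L (g : DihedralGroup 6) (L : AddSubgroup (ℤ × ℤ)) : (g • L).index = L.index := by
  exact AddSubgroup.index_map_equiv L (DistribMulAction.toAddEquiv (ℤ × ℤ) g)

instance (n : ℕ) : MulAction (DihedralGroup 6) (TL n) where
  smul g L := ⟨g • L.1, by rw [index_smul_L]; exact L.2.1, fun u hu hs => by
    rw [mem_smul_L] at hu
    have := L.2.2 _ hu (small_act _ _ hs)
    rw [← act_act_inv g u, this, act_zero]⟩
  one_smul L := Subtype.ext (one_smul _ L.1)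
  mul_smul g h L := Subtype.ext (mul_smul g h L.1)

lemma TL.smul_val {n : ℕ} (g : DihedralGroup 6) (L : TL n) : (g • L).1 = g • L.1 := rfl

variable {n : ℕ}

lemma card_fin_quot (hn : n ≠ 0) {L : AddSubgroup (ℤ × ℤ)} (h : L.index = n) :
    ∃ f : ℤ × ℤ → Fin n, Function.Surjective f ∧ ∀ x y, f x = f y ↔ x - y ∈ L := by
  have h1 : Nat.card ((ℤ × ℤ) ⧸ L) = n := h
  have h2 : Finite ((ℤ × ℤ) ⧸ L) := Nat.finite_of_card_ne_zero (by rw [h1]; exact hn)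
  let e := Finite.equivFinOfCardEq h1
  refine ⟨fun z => e (QuotientAddGroup.mk z), fun y => ?_, fun x y => ?_⟩
  · obtain ⟨z, hz⟩ := QuotientAddGroup.mk_surjective (e.symm y)
    exact ⟨z, by simp [hz]⟩
  · rw [e.apply_eq_iff_eq, eq_comm, QuotientAddGroup.eq, neg_add_eq_sub]

lemma surj_index {f : ℤ × ℤ → Fin n} (hs : Function.Surjective f) {L : AddSubgroup (ℤ × ℤ)}
    (hf : ∀ x y, f x = f y ↔ x - y ∈ L) : L.index = n := by
  have : Nat.card ((ℤ × ℤ) ⧸ L) = Nat.card (Fin n) := by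
    refine Nat.card_eq_of_bijective (Quotient.lift f fun a b hab => ?_) ⟨?_, ?_⟩
    · rw [hf, ← neg_mem_iff, neg_sub, ← neg_add_eq_sub]
      exact QuotientAddGroup.leftRel_apply.1 hab
    · intro a b
      induction a using Quotient.inductionOn with | _ a
      induction b using Quotient.inductionOn with | _ b
      intro hab
      refine Quotient.sound (QuotientAddGroup.leftRel_apply.2 ?_)
      have := (hf a b).1 hab
      rwa [← neg_mem_iff, neg_sub, ← neg_add_eq_sub] at this
    · intro y
      obtain ⟨x, hx⟩ := hs y
      exact ⟨Quotient.mk _ x, hx⟩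
  rw [Nat.card_fin] at this
  exact this

lemma dp_eq_one : ∀ g : DihedralGroup 6, dp g 0 = 0 → dp g 1 = 1 → g = .r 0 := by decide

lemma torus_classes (hn : n ≠ 0) :
    numClasses n (fun S => IsCombSurface n S ∧ IsEquivelar n S ∧ IsOrientable S ∧
      eulerChar n S = 0) =
    Nat.card (Quotient (MulAction.orbitRel (DihedralGroup 6) (TL n))) := by
  choose Φ h1 h2 using fun L : TL n => card_fin_quot hn L.2.1
  have hg : ∀ L, Good (Φ L) := by
    intro L
    refine ⟨h1 L, fun z w hs he => ?_, fun z w he => ⟨1, fun u => ?_⟩⟩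
    · exact sub_eq_zero.1 (L.2.2 _ ((h2 L _ _).1 he) hs)
    · rw [act_one, h2, add_sub_add_right_eq_sub]
      exact (h2 L _ _).1 he
  refine numClasses_good IsOrientable Φ hg ?_ ?_ _ ?_
  · intro L
    rw [(hg L).orient_iff]
    intro w d hd
    have hw : w ∈ L.1 := by
      have := (h2 L _ _).1 (hd 0)
      simpa [act_zero] using this
    have h3 : ∀ i, dp d i = i := by
      intro i
      have := (h2 L _ _).1 (hd (hx i))
      rw [add_sub_assoc, AddSubgroup.add_mem_cancel_left _ hw, act_hx] at this
      exact hx_inj _ _ (sub_eq_zero.1 (L.2.2 _ this (small_hx_sub _ _)))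
    exact ⟨0, dp_eq_one _ (h3 0) (h3 1)⟩
  · intro φ hφ ho
    rw [hφ.orient_iff] at ho
    have e := hφ.eq_iff ho
    have hL : (trL φ).index = n ∧ ∀ u ∈ trL φ, HexSmall u → u = 0 :=
      ⟨surj_index hφ.surj e, fun u hu hs => hφ.trL_good hu hs⟩
    let L : TL n := ⟨trL φ, hL⟩
    refine ⟨L, 0, 1, ?_⟩
    intro x y
    rw [h2, e, act_one, act_one, zero_add, zero_add]
  · intro L L'
    rw [MulAction.orbitRel_apply, MulAction.mem_orbit_symm, MulAction.mem_orbit_iff]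
    constructor
    · rintro ⟨w, d, h⟩
      refine ⟨d, Subtype.ext ?_⟩
      ext u
      rw [TL.smul_val, mem_smul_L]
      have := h (act d⁻¹ u) 0
      rw [h2, h2, act_act_inv, act_zero] at this
      simpa using this
    · rintro ⟨d, rfl⟩
      refine ⟨0, d, fun x y => ?_⟩
      rw [h2, h2, TL.smul_val, zero_add, zero_add, ← act_sub, act_mem_smul_L]

/-- The lattice spanned by `(d, 0)` and `(b, a)`. -/
def HLat (a b d : ℕ) : AddSubgroup (ℤ × ℤ) where
  carrier := {z | ∃ k : ℤ, z.2 = k * a ∧ (d : ℤ) ∣ z.1 - k * b}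
  zero_mem' := ⟨0, by simp, by simp⟩
  add_mem' := by
    rintro ⟨x, y⟩ ⟨x', y'⟩ ⟨k, h1, h2⟩ ⟨k', h1', h2'⟩
    refine ⟨k + k', ?_, ?_⟩
    · simp only at *; rw [Prod.snd_add, h1, h1']; ring
    · change (d : ℤ) ∣ (x + x') - (k + k') * b
      rw [show (x + x') - (k + k') * b = (x - k * b) + (x' - k' * b) by ring]
      exact dvd_add h2 h2'
  neg_mem' := by
    rintro ⟨x, y⟩ ⟨k, h1, h2⟩
    refine ⟨-k, ?_, ?_⟩
    · simp only at *; rw [Prod.snd_neg, h1]; ring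
    · change (d : ℤ) ∣ -x - -k * b
      rw [show -x - -k * b = -(x - k * b) by ring]
      exact dvd_neg.2 h2

lemma mem_Lat {a b d : ℕ} {x y : ℤ} : (x, y) ∈ HLat a b d ↔
    ∃ k : ℤ, y = k * a ∧ (d : ℤ) ∣ x - k * b := Iff.rfl

lemma mem_Lat' {a b d : ℕ} (ha : a ≠ 0) {x y : ℤ} : (x, y) ∈ HLat a b d ↔
    y % a = 0 ∧ (x - y / a * b) % d = 0 := by
  rw [mem_Lat]
  have ha' : (a : ℤ) ≠ 0 := by exact_mod_cast ha
  constructor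
  · rintro ⟨k, rfl, h⟩
    rw [Int.mul_ediv_cancel _ ha']
    exact ⟨Int.mul_emod_left _ _, Int.emod_eq_zero_of_dvd h⟩
  · rintro ⟨h1, h2⟩
    exact ⟨y / a, (Int.ediv_mul_cancel (Int.dvd_of_emod_eq_zero h1)).symm,
      Int.dvd_of_emod_eq_zero h2⟩

lemma HLat_index {a b d : ℕ} (ha : a ≠ 0) (hd : d ≠ 0) : (HLat a b d).index = a * d := by
  have := NeZero.mk ha
  have := NeZero.mk hd
  have ha' : (a : ℤ) ≠ 0 := by exact_mod_cast ha
  let f : ℤ × ℤ → ZMod a × ZMod d := fun z => ((z.2 : ZMod a), ((z.1 - z.2 / a * b : ℤ) : ZMod d))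
  have hf : ∀ x y, f x = f y ↔ x - y ∈ HLat a b d := by
    rintro ⟨x, y⟩ ⟨x', y'⟩
    simp only [f, Prod.mk.injEq]
    rw [eq_comm, ZMod.intCast_eq_intCast_iff_dvd_sub, Prod.mk_sub_mk, mem_Lat, eq_comm,
      ZMod.intCast_eq_intCast_iff_dvd_sub]
    constructor
    · rintro ⟨⟨k, hk⟩, h2⟩
      have e : y = y' + a * k := by linarith
      refine ⟨k, by rw [hk]; ring, ?_⟩
      rw [e, Int.add_mul_ediv_left _ _ ha'] at h2
      convert h2 using 1; ring
    · rintro ⟨k, hk, h2⟩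
      have e : y = y' + a * k := by linarith
      refine ⟨⟨k, by rw [hk]; ring⟩, ?_⟩
      rw [e, Int.add_mul_ediv_left _ _ ha']
      convert h2 using 1; ring
  have hs : Function.Surjective f := by
    rintro ⟨p, q⟩
    refine ⟨((q.val : ℤ), (p.val : ℤ)), ?_⟩
    have : (p.val : ℤ) / a = 0 := Int.ediv_eq_zero_of_lt (by positivity)
      (by exact_mod_cast p.val_lt)
    simp only [f, this]; simp
  let e : Fin (a * d) ≃ ZMod a × ZMod d := (Fintype.equivFinOfCardEq (by simp [ZMod.card])).symm
  exact surj_index (f := fun z => e.symm (f z)) (e.symm.surjective.comp hs)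
    (fun x y => by rw [e.symm.apply_eq_iff_eq, hf])

lemma HLat_inj {a b d a' b' d' : ℕ} (ha : a ≠ 0) (ha' : a' ≠ 0) (hb : b < d) (hb' : b' < d')
    (h : HLat a b d = HLat a' b' d') : a = a' ∧ b = b' := by
  have key : ∀ {a b d a' b' d' : ℕ}, a ≠ 0 → a' ≠ 0 → b < d → b' < d' →
      HLat a b d = HLat a' b' d' → a' ∣ a ∧ d' ∣ d := by
    intro a b d a' b' d' ha ha' hb hb' h
    have h1 : ((d : ℤ), (0 : ℤ)) ∈ HLat a' b' d' := h ▸ mem_Lat.2 ⟨0, by simp, by simp⟩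
    have h2 : ((b : ℤ), (a : ℤ)) ∈ HLat a' b' d' := h ▸ mem_Lat.2 ⟨1, by simp, by simp⟩
    obtain ⟨k, h3, h4⟩ := mem_Lat.1 h1
    obtain ⟨l, h5, -⟩ := mem_Lat.1 h2
    have : k = 0 := by
      rcases mul_eq_zero.1 h3.symm with h | h
      · exact h
      · exact absurd (by exact_mod_cast h) ha'
    rw [this, zero_mul, sub_zero] at h4
    exact ⟨Int.natCast_dvd_natCast.1 ⟨l, by rw [h5]; ring⟩, Int.natCast_dvd_natCast.1 h4⟩
  obtain ⟨h1, h2⟩ := key ha ha' hb hb' h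
  obtain ⟨h3, h4⟩ := key ha' ha hb' hb h.symm
  have e1 := Nat.dvd_antisymm h3 h1
  have e2 := Nat.dvd_antisymm h4 h2
  subst e1 e2
  refine ⟨rfl, ?_⟩
  have h2 : ((b : ℤ), (a : ℤ)) ∈ HLat a b' d := h ▸ mem_Lat.2 ⟨1, by simp, by simp⟩
  obtain ⟨k, h3, h4⟩ := mem_Lat.1 h2
  have hk : k = 1 := by
    have : (a : ℤ) ≠ 0 := by exact_mod_cast ha
    have : (k - 1) * (a : ℤ) = 0 := by linarith
    rcases mul_eq_zero.1 this with h | h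
    · linarith
    · contradiction
  rw [hk, one_mul] at h4
  have := Int.eq_zero_of_abs_lt_dvd h4 (by rw [abs_lt]; omega)
  omega

lemma exists_gen (P : AddSubgroup ℤ) : ∃ a : ℕ, ∀ x, x ∈ P ↔ (a : ℤ) ∣ x := by
  obtain ⟨a, rfl⟩ := Int.subgroup_cyclic P
  refine ⟨a.natAbs, fun x => ?_⟩
  rw [AddSubgroup.mem_closure_singleton, Int.natCast_natAbs, abs_dvd]
  constructor
  · rintro ⟨k, rfl⟩; exact ⟨k, by rw [smul_eq_mul, mul_comm]⟩
  · rintro ⟨k, rfl⟩; exact ⟨k, by rw [smul_eq_mul, mul_comm]⟩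

lemma exists_HLat (hn : n ≠ 0) {L : AddSubgroup (ℤ × ℤ)} (h : L.index = n) :
    ∃ a b d : ℕ, a ≠ 0 ∧ b < d ∧ a * d = n ∧ L = HLat a b d := by
  obtain ⟨a, ha⟩ := exists_gen (L.map (AddMonoidHom.snd ℤ ℤ))
  obtain ⟨d, hd⟩ := exists_gen (L.comap (AddMonoidHom.inl ℤ ℤ))
  have hnz : ∀ z : ℤ × ℤ, (n : ℕ) • z ∈ L := fun z => h ▸ AddSubgroup.nsmul_index_mem L z
  have ha' : ∀ y : ℤ, (∃ x, (x, y) ∈ L) ↔ (a : ℤ) ∣ y := by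
    intro y; rw [← ha]; simp
  have hd' : ∀ x : ℤ, (x, 0) ∈ L ↔ (d : ℤ) ∣ x := by
    intro y; rw [← hd]; simp
  have ha0 : a ≠ 0 := by
    rintro rfl
    have := (ha' n).1 ⟨0, by simpa using hnz (0, 1)⟩
    simp at this; exact hn this
  have hd0 : d ≠ 0 := by
    rintro rfl
    have := (hd' n).1 (by simpa using hnz (1, 0))
    simp at this; exact hn this
  obtain ⟨x0, hx0⟩ := (ha' a).2 dvd_rfl
  have hdz : (d : ℤ) ≠ 0 := by exact_mod_cast hd0
  have hb0 : 0 ≤ x0 % d := Int.emod_nonneg _ hdz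
  have hbd : x0 % d < d := Int.emod_lt_of_pos _ (by positivity)
  obtain ⟨b, hb⟩ := Int.eq_ofNat_of_zero_le hb0
  have hbL : ((b : ℤ), (a : ℤ)) ∈ L := by
    rw [← hb]
    have h1 : (d * (x0 / d), (0 : ℤ)) ∈ L := (hd' _).2 (Dvd.intro _ rfl)
    have := sub_mem hx0 h1
    rw [Prod.mk_sub_mk, sub_zero] at this
    rwa [Int.emod_def]
  have e : L = HLat a b d := by
    ext ⟨x, y⟩
    rw [mem_Lat]
    have h3 : ∀ k : ℤ, ((k * b, k * a) : ℤ × ℤ) ∈ L := fun k => by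
      have := zsmul_mem hbL k
      simpa using this
    constructor
    · intro hm
      obtain ⟨k, hk⟩ := (ha' y).1 ⟨x, hm⟩
      refine ⟨k, by rw [hk]; ring, ?_⟩
      rw [← hd']
      have := sub_mem hm (h3 k)
      rwa [Prod.mk_sub_mk, hk, mul_comm (a : ℤ) k, sub_self] at this
    · rintro ⟨k, rfl, h4⟩
      have := add_mem ((hd' _).2 h4) (h3 k)
      simpa using this
  refine ⟨a, b, d, ha0, ?_, ?_, e⟩
  · rw [hb] at hbd; exact_mod_cast hbd
  · rw [← h, e, HLat_index ha0 hd0]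

end Torus

/-! ### Counting lattices -/

/-- Membership in the lattice, by natural number arithmetic. -/
def memN (a b d : ℕ) (x y : ℕ) : Bool :=
  Nat.beq (y % a) 0 && Nat.beq ((x + y / a * (d - b)) % d) 0

/-- No small vectors. -/
def goodN (n a b d : ℕ) : Bool :=
  !(memN a b d 1 0 || memN a b d 0 1 || memN a b d 1 (n - 1) || memN a b d 2 0 ||
  memN a b d 0 2 || memN a b d 2 (n - 2) || memN a b d 1 1 || memN a b d 2 (n - 1) ||
  memN a b d 1 (n - 2))

/-- Indicator that two vectors lie in the lattice. -/
def fixN (a b d x y z w : ℕ) : ℕ :=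
  bif memN a b d x y && memN a b d z w then 1 else 0

/-- Order of the stabilizer. -/
def stabN (n a b d : ℕ) : ℕ := 2 * (1 + fixN a b d 0 d (n - a) (b + a) +
  fixN a b d (n - d) d (2 * n - b - a) b +
  fixN a b d d 0 (b + a) (n - a) + fixN a b d d (n - d) b (2 * n - b - a) +
  fixN a b d 0 (n - d) (n - a) (n - b))

/-- Number of pairs of a good lattice and an element of its stabilizer. -/
def cntN (n : ℕ) : ℕ := ∑ a ∈ range (n + 1),
  bif Nat.beq (a * (n / a)) n then ∑ b ∈ range (n / a),
  bif goodN n a b (n / a) then stabN n a b (n / a) else 0 else 0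

lemma cntN_total : ∑ n ∈ Icc 4 100, cntN n = 1357 * 12 := by decide +kernel

section Torus2

open Pointwise

variable {n a b d : ℕ}

lemma memN_iff (ha : a ≠ 0) (hb : b < d) (hn : a * d = n) {x y : ℕ} {x' y' : ℤ} (k l : ℤ)
    (hx : x' = x + n * k) (hy : y' = y + n * l) :
    memN a b d x y = true ↔ (x', y') ∈ HLat a b d := by
  have h1 : ((n * k, n * l) : ℤ × ℤ) ∈ HLat a b d := by
    refine mem_Lat.2 ⟨d * l, by rw [← hn]; push_cast; ring, a * k - l * b, ?_⟩
    rw [← hn]; push_cast; ring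
  have h2 : ((x', y') : ℤ × ℤ) = ((x : ℤ), (y : ℤ)) + (n * k, n * l) := by rw [hx, hy]; rfl
  rw [h2, AddSubgroup.add_mem_cancel_right _ h1, mem_Lat' ha]
  unfold memN
  rw [Bool.and_eq_true, Nat.beq_eq, Nat.beq_eq]
  have h3 : y % a = 0 ↔ (y : ℤ) % a = 0 := by
    rw [← Int.natCast_mod]; exact Int.natCast_eq_zero.symm
  have h4 : (x + y / a * (d - b)) % d = 0 ↔ ((x : ℤ) - y / a * b) % d = 0 := by
    rw [← Nat.dvd_iff_mod_eq_zero, ← Int.dvd_iff_emod_eq_zero, ← Int.natCast_dvd_natCast]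
    push_cast [hb.le]
    rw [show ((x : ℤ) + y / a * (d - b)) = ((x : ℤ) - y / a * b) + d * (y / a) by ring,
      dvd_add_left (dvd_mul_right _ _)]
  rw [h3, h4]

lemma goodN_iff (ha : a ≠ 0) (hb : b < d) (hn : a * d = n) (h4 : 4 ≤ n) :
    goodN n a b d = true ↔ ∀ u ∈ HLat a b d, HexSmall u → u = 0 := by
  have e1 := memN_iff ha hb hn (x := 1) (y := 0) (x' := 1) (y' := 0) 0 0 (by simp) (by simp)
  have e2 := memN_iff ha hb hn (x := 0) (y := 1) (x' := 0) (y' := 1) 0 0 (by simp) (by simp)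
  have e3 := memN_iff ha hb hn (x := 1) (y := n - 1) (x' := 1) (y' := -1) 0 (-1) (by simp)
    (by push_cast [show 1 ≤ n by omega]; ring)
  have e4 := memN_iff ha hb hn (x := 2) (y := 0) (x' := 2) (y' := 0) 0 0 (by simp) (by simp)
  have e5 := memN_iff ha hb hn (x := 0) (y := 2) (x' := 0) (y' := 2) 0 0 (by simp) (by simp)
  have e6 := memN_iff ha hb hn (x := 2) (y := n - 2) (x' := 2) (y' := -2) 0 (-1) (by simp)
    (by push_cast [show 2 ≤ n by omega]; ring)
  have e7 := memN_iff ha hb hn (x := 1) (y := 1) (x' := 1) (y' := 1) 0 0 (by simp) (by simp)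
  have e8 := memN_iff ha hb hn (x := 2) (y := n - 1) (x' := 2) (y' := -1) 0 (-1) (by simp)
    (by push_cast [show 1 ≤ n by omega]; ring)
  have e9 := memN_iff ha hb hn (x := 1) (y := n - 2) (x' := 1) (y' := -2) 0 (-1) (by simp)
    (by push_cast [show 2 ≤ n by omega]; ring)
  unfold goodN
  rw [Bool.not_eq_true', Bool.eq_false_iff, ne_eq]
  simp only [Bool.or_eq_true, e1, e2, e3, e4, e5, e6, e7, e8, e9]
  constructor
  · intro h u hu hs
    by_contra h0
    apply h
    have hu' : -u ∈ HLat a b d := neg_mem hu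
    obtain ⟨x, y⟩ := u
    obtain ⟨h1, h2, h3⟩ := hs
    simp only [abs_le] at h1 h2 h3
    rw [Prod.neg_mk] at hu'
    clear e1 e2 e3 e4 e5 e6 e7 e8 e9 h
    obtain ⟨h1, h1'⟩ := h1
    obtain ⟨h2, h2'⟩ := h2
    interval_cases x <;> interval_cases y <;>
      first
      | (exfalso; revert h3; decide)
      | (exfalso; exact h0 rfl)
      | (norm_num at hu'; simp only [hu, true_or, or_true])
      | (norm_num at hu'; simp only [hu', true_or, or_true])
  · intro h hc
    rcases hc with ((((((((hc | hc) | hc) | hc) | hc) | hc) | hc) | hc) | hc) <;>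
      exact absurd (h _ hc (by decide)) (by decide)

lemma smul_HLat (g : DihedralGroup 6) : g • HLat a b d = HLat a b d ↔
    act g (d, 0) ∈ HLat a b d ∧ act g (b, a) ∈ HLat a b d := by
  have m1 : ((d : ℤ), (0 : ℤ)) ∈ HLat a b d := mem_Lat.2 ⟨0, by simp, by simp⟩
  have m2 : ((b : ℤ), (a : ℤ)) ∈ HLat a b d := mem_Lat.2 ⟨1, by simp, by simp⟩
  constructor
  · intro h
    constructor
    · rw [← h, act_mem_smul_L]; exact m1
    · rw [← h, act_mem_smul_L]; exact m2
  · rintro ⟨h1, h2⟩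
    have h3 : ∀ u ∈ HLat a b d, act g u ∈ HLat a b d := by
      rintro ⟨x, y⟩ hu
      obtain ⟨k, h4, l, h5⟩ := mem_Lat.1 hu
      have : ((x, y) : ℤ × ℤ) = l • ((d : ℤ), (0 : ℤ)) + k • ((b : ℤ), (a : ℤ)) := by
        simp only [Prod.smul_mk, smul_eq_mul, Prod.mk_add_mk, Prod.mk.injEq]
        constructor <;> linarith
      rw [this, act_add, act_zsmul, act_zsmul]
      exact add_mem (zsmul_mem h1 _) (zsmul_mem h2 _)
    have h4 : ∀ k : ℕ, ∀ u ∈ HLat a b d, act (g ^ k) u ∈ HLat a b d := by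
      intro k
      induction k with
      | zero => intro u hu; rw [pow_zero, act_one]; exact hu
      | succ k ih => intro u hu; rw [pow_succ, act_mul]; exact ih _ (h3 u hu)
    have h5 : ∀ g : DihedralGroup 6, g ^ 11 = g⁻¹ := by decide
    ext u
    rw [mem_smul_L]
    constructor
    · intro hu
      have := h3 _ hu
      rwa [act_act_inv] at this
    · intro hu
      rw [← h5]; exact h4 11 u hu

lemma fixN_eq (ha : a ≠ 0) (hb : b < d) (hn : a * d = n) (g : DihedralGroup 6) {p q r s : ℤ}
    (h1 : hx (dp g 0) = (p, q)) (h2 : hx (dp g 1) = (r, s)) {x y z w : ℕ} (k l k' l' : ℤ)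
    (hx : d * p = x + n * k) (hy : d * q = y + n * l)
    (hz : b * p + a * r = z + n * k') (hw : b * q + a * s = w + n * l')
    [Decidable (g • HLat a b d = HLat a b d)] :
    (if g • HLat a b d = HLat a b d then 1 else 0) = fixN a b d x y z w := by
  unfold fixN
  have e1 := memN_iff ha hb hn k l hx hy
  have e2 := memN_iff ha hb hn k' l' hz hw
  rw [Bool.cond_eq_ite]
  congr 1
  rw [Bool.and_eq_true, e1, e2, smul_HLat, act_of h1 h2, act_of h1 h2, zero_mul, zero_mul,
    add_zero, add_zero]

lemma fix_neg (g g' : DihedralGroup 6) (h0 : hx (dp g' 0) = - hx (dp g 0))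
    (h1 : hx (dp g' 1) = - hx (dp g 1)) :
    g' • HLat a b d = HLat a b d ↔ g • HLat a b d = HLat a b d := by
  have : ∀ z, act g' z = - act g z := by
    intro z; unfold act; rw [h0, h1, smul_neg, smul_neg, neg_add]
  rw [smul_HLat, smul_HLat, this, this, neg_mem_iff, neg_mem_iff]

lemma stabN_eq (ha : a ≠ 0) (hb : b < d) (hn : a * d = n)
    [∀ g : DihedralGroup 6, Decidable (g • HLat a b d = HLat a b d)] :
    ∑ g : DihedralGroup 6, (if g • HLat a b d = HLat a b d then 1 else 0) = stabN n a b d := by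
  have han : a ≤ n := by rw [← hn]; exact Nat.le_mul_of_pos_right _ (by omega)
  have hdn : d ≤ n := by rw [← hn]; exact Nat.le_mul_of_pos_left _ (by omega)
  have hsum : ∀ f : DihedralGroup 6 → ℕ, ∑ g, f g = (f (.r 0) + f (.r 1) + f (.r 2) + f (.r 3) +
      f (.r 4) + f (.r 5)) + (f (.sr 0) + f (.sr 1) + f (.sr 2) + f (.sr 3) +
      f (.sr 4) + f (.sr 5)) := by
    intro f
    have : (univ : Finset (DihedralGroup 6)) = {.r 0, .r 1, .r 2, .r 3, .r 4, .r 5,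
      .sr 0, .sr 1, .sr 2, .sr 3, .sr 4, .sr 5} := by decide
    rw [this]
    repeat rw [sum_insert (by decide)]
    rw [sum_singleton]
    ring
  rw [hsum]
  have f0 : (.r 0 : DihedralGroup 6) • HLat a b d = HLat a b d := one_smul _ _
  have n0 := fix_neg (a := a) (b := b) (d := d) (.r 0) (.r 3) (by decide) (by decide)
  have n1 := fix_neg (a := a) (b := b) (d := d) (.r 1) (.r 4) (by decide) (by decide)
  have n2 := fix_neg (a := a) (b := b) (d := d) (.r 2) (.r 5) (by decide) (by decide)
  have n3 := fix_neg (a := a) (b := b) (d := d) (.sr 0) (.sr 3) (by decide) (by decide)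
  have n4 := fix_neg (a := a) (b := b) (d := d) (.sr 1) (.sr 4) (by decide) (by decide)
  have n5 := fix_neg (a := a) (b := b) (d := d) (.sr 2) (.sr 5) (by decide) (by decide)
  have f1 := fixN_eq ha hb hn (.r 1) (p := 0) (q := 1) (r := -1) (s := 1) (by decide) (by decide)
    (x := 0) (y := d) (z := n - a) (w := b + a) 0 0 (-1) 0 (by simp) (by simp)
    (by push_cast [han]; ring) (by push_cast; ring)
  have f2 := fixN_eq ha hb hn (.r 2) (p := -1) (q := 1) (r := -1) (s := 0) (by decide) (by decide)
    (x := n - d) (y := d) (z := 2 * n - b - a) (w := b) (-1) 0 (-2) 0 (by push_cast [hdn]; ring)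
    (by simp) (by rw [Nat.sub_sub]; push_cast [show b + a ≤ 2 * n by omega]; ring) (by simp)
  have f3 := fixN_eq ha hb hn (.sr 0) (p := 1) (q := 0) (r := 1) (s := -1) (by decide) (by decide)
    (x := d) (y := 0) (z := b + a) (w := n - a) 0 0 0 (-1) (by simp) (by simp)
    (by push_cast; ring) (by push_cast [han]; ring)
  have f4 := fixN_eq ha hb hn (.sr 1) (p := 1) (q := -1) (r := 0) (s := -1) (by decide) (by decide)
    (x := d) (y := n - d) (z := b) (w := 2 * n - b - a) 0 (-1) 0 (-2) (by simp)
    (by push_cast [hdn]; ring) (by simp)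
    (by rw [Nat.sub_sub]; push_cast [show b + a ≤ 2 * n by omega]; ring)
  have f5 := fixN_eq ha hb hn (.sr 2) (p := 0) (q := -1) (r := -1) (s := 0) (by decide) (by decide)
    (x := 0) (y := n - d) (z := n - a) (w := n - b) 0 (-1) (-1) (-1) (by simp)
    (by push_cast [hdn]; ring) (by push_cast [han]; ring)
    (by push_cast [show b ≤ n by omega]; ring)
  simp only [n0, n1, n2, n3, n4, n5, f1, f2, f3, f4, f5, if_pos f0, stabN]
  ring

lemma card_fixedBy (h4 : 4 ≤ n) (g : DihedralGroup 6)
    [∀ a b d, Decidable (g • HLat a b d = HLat a b d)] :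
    Nat.card (MulAction.fixedBy (TL n) g) =
      ∑ a ∈ range (n + 1), ∑ b ∈ range (n / a), if (a * (n / a) = n ∧ goodN n a b (n / a) = true) ∧
        g • HLat a b (n / a) = HLat a b (n / a) then 1 else 0 := by
  rw [sum_sigma' (range (n + 1)) (fun a => range (n / a)) (fun a b =>
    if (a * (n / a) = n ∧ goodN n a b (n / a) = true) ∧
        g • HLat a b (n / a) = HLat a b (n / a) then 1 else 0), ← card_filter]
  set s : Finset (Σ _ : ℕ, ℕ) := {i ∈ (range (n + 1)).sigma fun a => range (n / a) |
        (i.fst * (n / i.fst) = n ∧ goodN n i.fst i.snd (n / i.fst) = true) ∧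
          g • HLat i.fst i.snd (n / i.fst) = HLat i.fst i.snd (n / i.fst)} with hs
  have hm : ∀ p ∈ s, p.1 ≠ 0 ∧ p.2 < n / p.1 ∧ p.1 * (n / p.1) = n ∧
      goodN n p.1 p.2 (n / p.1) = true ∧ g • HLat p.1 p.2 (n / p.1) = HLat p.1 p.2 (n / p.1) := by
    intro p hp
    simp only [hs, mem_filter, mem_sigma, mem_range] at hp
    obtain ⟨⟨-, h1⟩, ⟨h2, h3⟩, h5⟩ := hp
    refine ⟨?_, h1, h2, h3, h5⟩
    intro h0
    rw [h0, zero_mul] at h2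
    omega
  let f : s → MulAction.fixedBy (TL n) g := fun p =>
    ⟨⟨HLat p.1.1 p.1.2 (n / p.1.1), by
      obtain ⟨h1, h2, h3, -, -⟩ := hm p.1 p.2
      rw [HLat_index h1 (by omega), h3],
      by
      obtain ⟨h1, h2, h3, h5, -⟩ := hm p.1 p.2
      exact (goodN_iff h1 h2 h3 h4).1 h5⟩, Subtype.ext (hm p.1 p.2).2.2.2.2⟩
  have hf : Function.Bijective f := by
    constructor
    · rintro ⟨⟨a, b⟩, hp⟩ ⟨⟨a', b'⟩, hq⟩ hpq
      have h1 := hm _ hp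
      have h2 := hm _ hq
      have h3 : HLat a b (n / a) = HLat a' b' (n / a') :=
        congrArg (fun t : MulAction.fixedBy (TL n) g => t.1.1) hpq
      obtain ⟨rfl, rfl⟩ := HLat_inj h1.1 h2.1 h1.2.1 h2.2.1 h3
      rfl
    · rintro ⟨⟨L, hL1, hL2⟩, hL3⟩
      obtain ⟨a, b, d, h1, h2, h3, rfl⟩ := exists_HLat (by omega) hL1
      have hd : n / a = d := by rw [← h3]; exact Nat.mul_div_cancel_left _ (by omega)
      have han : a ≤ n := by rw [← h3]; exact Nat.le_mul_of_pos_right _ (by omega)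
      have hg : g • HLat a b d = HLat a b d := congrArg (fun t : TL n => t.1) hL3
      refine ⟨⟨⟨a, b⟩, ?_⟩, ?_⟩
      · simp only [hs, mem_filter, mem_sigma, mem_range]
        rw [hd]
        exact ⟨⟨by omega, h2⟩, ⟨h3, (goodN_iff h1 h2 h3 h4).2 hL2⟩, hg⟩
      · apply Subtype.ext
        apply Subtype.ext
        simp only [f]
        rw [hd]
  rw [← Nat.card_eq_of_bijective f hf, Nat.card_eq_fintype_card, Fintype.card_coe]

lemma sum_fixedBy (h4 : 4 ≤ n) :
    ∑ g : DihedralGroup 6, Nat.card (MulAction.fixedBy (TL n) g) = cntN n := by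
  classical
  simp only [card_fixedBy h4]
  rw [sum_comm]
  unfold cntN
  refine sum_congr rfl fun a _ => ?_
  rw [sum_comm, Bool.cond_eq_ite]
  by_cases h1 : a * (n / a) = n
  · rw [if_pos (by rw [h1]; exact Nat.beq_refl n)]
    refine sum_congr rfl fun b hb => ?_
    rw [mem_range] at hb
    have ha : a ≠ 0 := by rintro rfl; rw [zero_mul] at h1; omega
    rw [Bool.cond_eq_ite]
    by_cases h2 : goodN n a b (n / a) = true
    · rw [if_pos h2, ← stabN_eq ha hb h1]
      simp only [h1, h2, true_and]
    · rw [if_neg h2]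
      simp [h2]
  · rw [if_neg (by rw [Nat.beq_eq]; exact h1)]
    simp [h1]

lemma TL_finite (h4 : 4 ≤ n) : Finite (TL n) := by
  classical
  have h1 : ∀ L : TL n, ∃ p : Fin (n + 1) × Fin (n + 1) × Fin (n + 1),
      L.1 = HLat p.1 p.2.1 p.2.2 := by
    intro L
    obtain ⟨a, b, d, h1, h2, h3, h5⟩ := exists_HLat (by omega) L.2.1
    have han : a ≤ n := by rw [← h3]; exact Nat.le_mul_of_pos_right _ (by omega)
    have hdn : d ≤ n := by rw [← h3]; exact Nat.le_mul_of_pos_left _ (by omega)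
    exact ⟨(⟨a, by omega⟩, ⟨b, by omega⟩, ⟨d, by omega⟩), h5⟩
  choose f hf using h1
  exact Finite.of_injective f fun L L' h => Subtype.ext (by rw [hf, hf, h])

lemma torus_count (h4 : 4 ≤ n) :
    numClasses n (fun S => IsCombSurface n S ∧ IsEquivelar n S ∧ IsOrientable S ∧
      eulerChar n S = 0) * 12 = cntN n := by
  classical
  have := TL_finite h4
  have : Fintype (TL n) := Fintype.ofFinite _
  rw [torus_classes (by omega), ← sum_fixedBy h4]
  have := MulAction.sum_card_fixedBy_eq_card_orbits_mul_card_group (DihedralGroup 6) (TL n)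
  rw [DihedralGroup.card] at this
  simp only [Nat.card_eq_fintype_card]
  exact this.symm

lemma torus_total : (∑ n ∈ Finset.Icc 4 100, numClasses n (fun S => IsCombSurface n S ∧
      IsEquivelar n S ∧ IsOrientable S ∧ eulerChar n S = 0)) = 1357 := by
  have : (∑ n ∈ Finset.Icc 4 100, numClasses n (fun S => IsCombSurface n S ∧
      IsEquivelar n S ∧ IsOrientable S ∧ eulerChar n S = 0)) * 12 = 1357 * 12 := by
    rw [sum_mul, ← cntN_total]
    exact sum_congr rfl fun n hn => torus_count (mem_Icc.1 hn).1
  omega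

end Torus2

/-! ### Models of Klein bottles -/

section Klein

/-- The two types of reflections of the lattice. -/
def rfl6 : Bool → DihedralGroup 6
  | true => .sr 5
  | false => .sr 2

/-- Adapted coordinates. -/
def cA (τ : Bool) (z : ℤ × ℤ) : ℤ × ℤ := bif τ then (z.1 + z.2, z.2) else (z.1 - z.2, -z.2)

/-- Inverse of the adapted coordinates. -/
def cB (τ : Bool) (z : ℤ × ℤ) : ℤ × ℤ := (z.1 - z.2, bif τ then z.2 else -z.2)

/-- The reflection in adapted coordinates. -/
def sg (z : ℤ × ℤ) : ℤ × ℤ := (z.1, z.1 - z.2)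

lemma cA_cB (τ : Bool) (z : ℤ × ℤ) : cA τ (cB τ z) = z := by
  cases τ <;> simp [cA, cB]

lemma cB_cA (τ : Bool) (z : ℤ × ℤ) : cB τ (cA τ z) = z := by
  cases τ <;> simp [cA, cB]

lemma cA_add (τ : Bool) (z w : ℤ × ℤ) : cA τ (z + w) = cA τ z + cA τ w := by
  cases τ <;> simp only [cA, cond_true, cond_false, Prod.fst_add, Prod.snd_add, Prod.mk_add_mk,
    Prod.mk.injEq] <;> refine ⟨?_, ?_⟩ <;> first | trivial | ring

lemma cB_add (τ : Bool) (z w : ℤ × ℤ) : cB τ (z + w) = cB τ z + cB τ w := by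
  cases τ <;> simp only [cB, cond_true, cond_false, Prod.fst_add, Prod.snd_add, Prod.mk_add_mk,
    Prod.mk.injEq] <;> refine ⟨?_, ?_⟩ <;> first | trivial | ring

lemma sg_add (z w : ℤ × ℤ) : sg (z + w) = sg z + sg w := by
  simp only [sg, Prod.fst_add, Prod.snd_add, Prod.mk_add_mk, Prod.mk.injEq]
  exact ⟨trivial, by ring⟩

lemma sg_sg (z : ℤ × ℤ) : sg (sg z) = z := by simp [sg]

lemma cA_rfl (τ : Bool) (z : ℤ × ℤ) : cA τ (act (rfl6 τ) z) = sg (cA τ z) := by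
  obtain ⟨x, y⟩ := z
  cases τ
  · rw [rfl6, act_of (p := 0) (q := -1) (r := -1) (s := 0) (by decide) (by decide)]
    simp only [cA, sg, cond_false, Prod.mk.injEq]; constructor <;> ring
  · rw [rfl6, act_of (p := 0) (q := 1) (r := 1) (s := 0) (by decide) (by decide)]
    simp only [cA, sg, cond_true, Prod.mk.injEq]; constructor <;> ring

lemma cB_sg (τ : Bool) (z : ℤ × ℤ) : cB τ (sg z) = act (rfl6 τ) (cB τ z) := by
  rw [← cB_cA τ (act _ _), cA_rfl, cA_cB]

/-- The fibers of the model. -/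
def KRel (c d : ℕ) (z w : ℤ × ℤ) : Prop :=
  (∃ p : ℤ, w.1 - z.1 = 2 * (c * p) ∧ (d : ℤ) ∣ w.2 - z.2 - c * p) ∨
  (∃ p : ℤ, w.1 - z.1 = 2 * (c * p) + c ∧ (d : ℤ) ∣ w.2 - (z.1 - z.2) - c * p)

/-- Normal form. -/
def kN (c d : ℕ) (z : ℤ × ℤ) : ZMod c × ZMod d :=
  ((z.1 : ZMod c), ((if (z.1 / c) % 2 = 0 then z.2 - (z.1 / c) / 2 * c
    else z.1 - c - (z.1 / c) / 2 * c - z.2 : ℤ) : ZMod d))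

lemma kN_iff {c d : ℕ} (hc : c ≠ 0) (z w : ℤ × ℤ) : kN c d z = kN c d w ↔ KRel c d z w := by
  have hc' : (c : ℤ) ≠ 0 := by exact_mod_cast hc
  have tr : ∀ {x y : ℤ}, (d : ℤ) ∣ x → x = y → (d : ℤ) ∣ y := fun h e => e ▸ h
  obtain ⟨m, k⟩ := z
  obtain ⟨m', k'⟩ := w
  have main : ∀ e : ℤ, m' = m + c * e → ((kN c d (m, k)).2 = (kN c d (m', k')).2 ↔
      (∃ p : ℤ, e = 2 * p ∧ (d : ℤ) ∣ k' - k - c * p) ∨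
      (∃ p : ℤ, e = 2 * p + 1 ∧ (d : ℤ) ∣ k' - (m - k) - c * p)) := by
    intro e he
    have hj : m' / c = m / c + e := by rw [he, Int.add_mul_ediv_left _ _ hc']
    simp only [kN, hj]
    rw [ZMod.intCast_eq_intCast_iff_dvd_sub]
    generalize m / c = j
    rcases Int.emod_two_eq_zero_or_one e with h1 | h1 <;>
      rcases Int.emod_two_eq_zero_or_one j with h2 | h2
    · obtain ⟨p, rfl⟩ := Int.dvd_of_emod_eq_zero h1
      obtain ⟨i, rfl⟩ := Int.dvd_of_emod_eq_zero h2
      rw [if_pos h2, if_pos (by omega), show (2 * i + 2 * p) / 2 = i + p by omega,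
        show 2 * i / 2 = i by omega]
      constructor
      · intro h; left; exact ⟨p, rfl, by convert h using 1; ring⟩
      · rintro (⟨q, h3, h4⟩ | ⟨q, h3, h4⟩)
        · obtain rfl : p = q := by omega
          convert h4 using 1; ring
        · omega
    · obtain ⟨p, rfl⟩ := Int.dvd_of_emod_eq_zero h1
      obtain ⟨i, rfl⟩ : ∃ i, j = 2 * i + 1 := ⟨j / 2, by omega⟩
      rw [if_neg (by omega), if_neg (by omega), show (2 * i + 1 + 2 * p) / 2 = i + p by omega,
        show (2 * i + 1) / 2 = i by omega]
      constructor
      · intro h; left; refine ⟨p, rfl, ?_⟩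
        exact tr ((dvd_neg (α := ℤ)).2 h) (by rw [he]; ring)
      · rintro (⟨q, h3, h4⟩ | ⟨q, h3, h4⟩)
        · obtain rfl : p = q := by omega
          exact tr ((dvd_neg (α := ℤ)).2 h4) (by rw [he]; ring)
        · omega
    · obtain ⟨p, rfl⟩ : ∃ i, e = 2 * i + 1 := ⟨e / 2, by omega⟩
      obtain ⟨i, rfl⟩ := Int.dvd_of_emod_eq_zero h2
      rw [if_pos h2, if_neg (by omega), show (2 * i + (2 * p + 1)) / 2 = i + p by omega,
        show 2 * i / 2 = i by omega]
      constructor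
      · intro h; right; refine ⟨p, rfl, ?_⟩
        exact tr ((dvd_neg (α := ℤ)).2 h) (by rw [he]; ring)
      · rintro (⟨q, h3, h4⟩ | ⟨q, h3, h4⟩)
        · omega
        · obtain rfl : p = q := by omega
          exact tr ((dvd_neg (α := ℤ)).2 h4) (by rw [he]; ring)
    · obtain ⟨p, rfl⟩ : ∃ i, e = 2 * i + 1 := ⟨e / 2, by omega⟩
      obtain ⟨i, rfl⟩ : ∃ i, j = 2 * i + 1 := ⟨j / 2, by omega⟩
      rw [if_pos (show (2 * i + 1 + (2 * p + 1)) % 2 = 0 by omega),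
        if_neg (show ¬ (2 * i + 1) % 2 = 0 by omega),
        show (2 * i + 1 + (2 * p + 1)) / 2 = i + p + 1 by omega,
        show (2 * i + 1) / 2 = i by omega]
      constructor
      · intro h; right; refine ⟨p, rfl, ?_⟩
        convert h using 1; ring
      · rintro (⟨q, h3, h4⟩ | ⟨q, h3, h4⟩)
        · omega
        · obtain rfl : p = q := by omega
          convert h4 using 1; ring
  rw [Prod.ext_iff]
  constructor
  · rintro ⟨h1, h2⟩
    simp only [kN] at h1
    rw [ZMod.intCast_eq_intCast_iff_dvd_sub] at h1
    obtain ⟨e, he⟩ := h1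
    rcases (main e (by linarith)).1 h2 with ⟨p, rfl, h⟩ | ⟨p, rfl, h⟩
    · exact .inl ⟨p, by simp only; rw [he]; ring, h⟩
    · exact .inr ⟨p, by simp only; rw [he]; ring, h⟩
  · rintro (⟨p, h1, h2⟩ | ⟨p, h1, h2⟩)
    · simp only at h1 h2
      refine ⟨?_, (main (2 * p) (by linarith)).2 (.inl ⟨p, rfl, h2⟩)⟩
      simp only [kN]
      rw [ZMod.intCast_eq_intCast_iff_dvd_sub]
      exact ⟨2 * p, by linarith⟩
    · simp only at h1 h2
      refine ⟨?_, (main (2 * p + 1) (by linarith)).2 (.inr ⟨p, rfl, h2⟩)⟩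
      simp only [kN]
      rw [ZMod.intCast_eq_intCast_iff_dvd_sub]
      exact ⟨2 * p + 1, by linarith⟩

lemma kN_surj {c d : ℕ} (hc : c ≠ 0) (hd : d ≠ 0) : Function.Surjective (kN c d) := by
  have := NeZero.mk hc
  have := NeZero.mk hd
  rintro ⟨p, q⟩
  refine ⟨((p.val : ℤ), (q.val : ℤ)), ?_⟩
  have : (p.val : ℤ) / c = 0 := Int.ediv_eq_zero_of_lt (by positivity)
    (by exact_mod_cast p.val_lt)
  simp only [kN, this]; simp

lemma card_zmod2 {c d : ℕ} (hc : c ≠ 0) (hd : d ≠ 0) : Nat.card (ZMod c × ZMod d) = c * d := by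
  rw [Nat.card_prod, Nat.card_zmod, Nat.card_zmod]

/-- Parameters of Klein bottles. -/
def KValid (τ : Bool) (c d : ℕ) : Prop := bif τ then 3 ≤ c ∧ 3 ≤ d else 5 ≤ c ∧ 2 ≤ d

instance (τ : Bool) (c d : ℕ) : Decidable (KValid τ c d) := by
  unfold KValid; cases τ <;> simp only [cond_true, cond_false] <;> infer_instance

lemma KValid.c_ne {τ : Bool} {c d : ℕ} (h : KValid τ c d) : c ≠ 0 := by
  cases τ <;> simp only [KValid, cond_true, cond_false] at h <;> omega

lemma KValid.d_ne {τ : Bool} {c d : ℕ} (h : KValid τ c d) : d ≠ 0 := by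
  cases τ <;> simp only [KValid, cond_true, cond_false] at h <;> omega

lemma exists_model {n c d : ℕ} {τ : Bool} (hv : KValid τ c d) (hn : c * d = n) :
    ∃ f : ℤ × ℤ → Fin n, Function.Surjective f ∧
      ∀ z w, f z = f w ↔ KRel c d (cA τ z) (cA τ w) := by
  have h1 := card_zmod2 hv.c_ne hv.d_ne
  have : Finite (ZMod c × ZMod d) := Nat.finite_of_card_ne_zero (by
    rw [h1]; exact mul_ne_zero hv.c_ne hv.d_ne)
  let e := Finite.equivFinOfCardEq (h1.trans hn)
  refine ⟨fun z => e (kN c d (cA τ z)), ?_, ?_⟩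
  · intro y
    obtain ⟨z, hz⟩ := kN_surj hv.c_ne hv.d_ne (e.symm y)
    exact ⟨cB τ z, by simp only [cA_cB, hz, Equiv.apply_symm_apply]⟩
  · intro z w
    rw [e.apply_eq_iff_eq, kN_iff hv.c_ne]

lemma KRel.small {τ : Bool} {c d : ℕ} (hv : KValid τ c d) {z w : ℤ × ℤ}
    (hs : HexSmall (z - w)) (h : KRel c d (cA τ z) (cA τ w)) : z = w := by
  obtain ⟨x, y⟩ := z
  obtain ⟨x', y'⟩ := w
  obtain ⟨s1, s2, s3⟩ := hs
  simp only [abs_le, Prod.mk_sub_mk] at s1 s2 s3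
  have big : ∀ (k : ℤ) (q : ℤ) (B : ℤ), k * q ≤ B → -B ≤ k * q → B < k → q = 0 := by
    intro k q B h1 h2 h3
    by_contra hq
    rcases lt_or_gt_of_ne hq with h | h
    · nlinarith
    · nlinarith
  cases τ
  · simp only [KValid, cond_false] at hv
    simp only [KRel, cA, cond_false] at h
    rcases h with ⟨p, h1, ⟨q, h2⟩⟩ | ⟨p, h1, -⟩
    · have hp : p = 0 := big c p 4 (by linarith) (by linarith) (by omega)
      subst hp
      have hq : q = 0 := big d q 1 (by linarith) (by linarith) (by omega)
      subst hq
      simp only [mul_zero] at h1 h2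
      rw [Prod.mk.injEq]; omega
    · exfalso
      have := big c (2 * p + 1) 4 (by linarith) (by linarith) (by omega)
      omega
  · simp only [KValid, cond_true] at hv
    simp only [KRel, cA, cond_true] at h
    rcases h with ⟨p, h1, ⟨q, h2⟩⟩ | ⟨p, h1, -⟩
    · have hp : p = 0 := big c p 2 (by linarith) (by linarith) (by omega)
      subst hp
      have hq : q = 0 := big d q 2 (by linarith) (by linarith) (by omega)
      subst hq
      simp only [mul_zero] at h1 h2
      rw [Prod.mk.injEq]; omega
    · exfalso
      have := big c (2 * p + 1) 2 (by linarith) (by linarith) (by omega)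
      omega

section Model

variable {n c d : ℕ} {τ : Bool} {φ : ℤ × ℤ → Fin n}

lemma model_loc (hφ : ∀ z w, φ z = φ w ↔ KRel c d (cA τ z) (cA τ w)) {z w : ℤ × ℤ}
    (h : φ z = φ w) : ∃ g, (g = 1 ∨ g = rfl6 τ) ∧ ∀ u, φ (z + u) = φ (w + act g u) := by
  rw [hφ] at h
  rcases h with ⟨p, h1, h2⟩ | ⟨p, h1, h2⟩
  · refine ⟨1, .inl rfl, fun u => ?_⟩
    rw [act_one, hφ, cA_add, cA_add]
    refine .inl ⟨p, ?_, ?_⟩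
    · rw [← h1]; simp only [Prod.fst_add]; ring
    · convert h2 using 1; simp only [Prod.snd_add]; ring
  · refine ⟨_, .inr rfl, fun u => ?_⟩
    rw [hφ, cA_add, cA_add, cA_rfl]
    refine .inr ⟨p, ?_, ?_⟩
    · rw [← h1]; simp only [Prod.fst_add, sg]; ring
    · convert h2 using 1; simp only [Prod.fst_add, Prod.snd_add, sg]; ring

lemma model_good (hv : KValid τ c d) (hs : Function.Surjective φ)
    (hφ : ∀ z w, φ z = φ w ↔ KRel c d (cA τ z) (cA τ w)) : Good φ := by
  refine ⟨hs, fun z w h1 h2 => ((hφ z w).1 h2).small hv h1, fun z w h => ?_⟩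
  obtain ⟨g, -, hg⟩ := model_loc hφ h
  exact ⟨g, hg⟩

lemma model_glide (hφ : ∀ z w, φ z = φ w ↔ KRel c d (cA τ z) (cA τ w)) (u : ℤ × ℤ) :
    φ (cB τ (c, 0) + act (rfl6 τ) u) = φ u := by
  rw [eq_comm, hφ, cA_add, cA_cB, cA_rfl]
  refine .inr ⟨0, ?_, ?_⟩
  · simp [sg]
  · simp [sg]

lemma rfl6_ne : ∀ τ i, rfl6 τ ≠ .r i := by decide

lemma model_nonor (hv : KValid τ c d) (hs : Function.Surjective φ)
    (hφ : ∀ z w, φ z = φ w ↔ KRel c d (cA τ z) (cA τ w)) : ¬ IsOrientable (quotS φ) := by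
  rw [(model_good hv hs hφ).orient_iff]
  intro h
  obtain ⟨i, hi⟩ := h _ _ (model_glide hφ)
  exact rfl6_ne _ _ hi

end Model

lemma dp_ext : ∀ g h : DihedralGroup 6, dp g 0 = dp h 0 → dp g 1 = dp h 1 → g = h := by decide

lemma conj_cases : ∀ (τ τ' : Bool) (e : DihedralGroup 6), e * rfl6 τ * e⁻¹ = rfl6 τ' →
    τ = τ' ∧ (e = 1 ∨ e = .r 3 ∨ e = rfl6 τ ∨ e = .r 3 * rfl6 τ) := by decide

lemma conj_ne_one : ∀ (τ : Bool) (e : DihedralGroup 6), e * rfl6 τ * e⁻¹ ≠ 1 := by decide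

lemma act_r3 (z : ℤ × ℤ) : act (.r 3) z = -z := by
  obtain ⟨x, y⟩ := z
  rw [act_of (p := -1) (q := 0) (r := 0) (s := -1) (by decide) (by decide)]
  simp

lemma model_iso {n c d c' d' : ℕ} {τ τ' : Bool} {φ φ' : ℤ × ℤ → Fin n}
    (hv' : KValid τ' c' d') (hs' : Function.Surjective φ')
    (hφ : ∀ z w, φ z = φ w ↔ KRel c d (cA τ z) (cA τ w))
    (hφ' : ∀ z w, φ' z = φ' w ↔ KRel c' d' (cA τ' z) (cA τ' w)) (h : Equi φ φ') :
    τ = τ' ∧ c' ∣ c := by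
  obtain ⟨w, e, he⟩ := h
  have hg' := model_good hv' hs' hφ'
  set t := cB τ (c, 0) with ht
  have h1 : ∀ u, φ' (w + act e (t + act (rfl6 τ) u)) = φ' (w + act e u) := fun u =>
    (he _ _).1 (model_glide hφ u)
  set f := e * rfl6 τ * e⁻¹ with hf
  have h2 : ∀ v, φ' (w + act e t + act f v) = φ' (w + v) := by
    intro v
    have := h1 (act e⁻¹ v)
    rw [act_add, act_act_inv, ← act_mul, ← act_mul, ← add_assoc] at this
    rw [hf]; exact this
  have h0 : φ' (w + act e t) = φ' w := by simpa [act_zero] using h2 0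
  obtain ⟨g, hg, hgu⟩ := model_loc hφ' h0.symm
  have hfg : f = g := by
    have key : ∀ i, dp f i = dp g i := by
      intro i
      have := (h2 (hx i)).trans (hgu (hx i))
      rw [act_hx, act_hx] at this
      exact hg'.star _ _ _ this
    exact dp_ext _ _ (key 0) (key 1)
  rcases hg with rfl | rfl
  · exact absurd hfg (conj_ne_one τ e)
  obtain ⟨rfl, hc⟩ := conj_cases _ _ _ hfg
  refine ⟨rfl, ?_⟩
  have hd : (c' : ℤ) ∣ (cA τ (act e t)).1 := by
    have := (hφ' _ _).1 h0.symm
    rw [cA_add] at this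
    rcases this with ⟨p, h3, -⟩ | ⟨p, h3, -⟩
    · rw [Prod.fst_add, add_sub_cancel_left] at h3
      exact ⟨2 * p, by rw [h3]; ring⟩
    · rw [Prod.fst_add, add_sub_cancel_left] at h3
      exact ⟨2 * p + 1, by rw [h3]; ring⟩
  have hneg : ∀ z, (cA τ (-z)).1 = -(cA τ z).1 := by
    intro z; cases τ <;> simp [cA] <;> ring
  have hc1 : (cA τ t).1 = c := by rw [ht, cA_cB]
  have hsg : ∀ z, (sg z).1 = z.1 := fun z => rfl
  rw [← Int.natCast_dvd_natCast]
  rcases hc with rfl | rfl | rfl | rfl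
  · rwa [act_one, hc1] at hd
  · rwa [act_r3, hneg, hc1, dvd_neg] at hd
  · rwa [cA_rfl, hsg, hc1] at hd
  · rwa [act_mul, act_r3, hneg, cA_rfl, hsg, hc1, dvd_neg] at hd

lemma Equi.symm {n : ℕ} {φ ψ : ℤ × ℤ → Fin n} (h : Equi φ ψ) : Equi ψ φ := by
  obtain ⟨w, d, h⟩ := h
  refine ⟨act d⁻¹ (-w), d⁻¹, fun x y => ?_⟩
  rw [← act_add, ← act_add, h, act_act_inv, act_act_inv, add_neg_cancel_left, add_neg_cancel_left]

end Klein

/-! ### Classification of Klein bottles -/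

section KleinClass

variable {n : ℕ}

lemma glide_classify {ψ : ℤ × ℤ → Fin n} {c0 e : ℤ}
    (H1 : ∀ u, ψ ((c0, e) + sg u) = ψ u)
    (H2 : ∀ z w, ψ z = ψ w → w - z ∈ trL ψ ∨ w - ((c0, e) + sg z) ∈ trL ψ)
    (H3 : ∀ t ∈ trL ψ, t.1 ≠ c0) :
    ∃ (c d : ℕ) (e' : ℤ), c ≠ 0 ∧ d ≠ 0 ∧
      ∀ z w, ψ (z - (e', 0)) = ψ (w - (e', 0)) ↔ KRel c d z w := by
  have sgL : ∀ t ∈ trL ψ, sg t ∈ trL ψ := by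
    intro t ht z
    obtain ⟨u, rfl⟩ : ∃ u, z = (c0, e) + sg u :=
      ⟨sg (z - (c0, e)), by rw [sg_sg, add_sub_cancel]⟩
    rw [add_assoc, ← sg_add, H1, H1, ht]
  have dbl : ∀ t ∈ trL ψ, (2 * t.1, t.1) ∈ trL ψ := by
    intro t ht
    have h := add_mem ht (sgL t ht)
    have e1 : t + sg t = (2 * t.1, t.1) := by ext <;> simp [sg]; ring
    rwa [e1] at h
  have hg2 : (2 * c0, c0) ∈ trL ψ := by
    intro z
    have h := (H1 ((c0, e) + sg z)).trans (H1 z)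
    have e1 : (c0, e) + sg ((c0, e) + sg z) = z + (2 * c0, c0) := by
      ext <;> simp [sg] <;> ring
    rwa [e1] at h
  let fJ : ℤ →+ ℤ × ℤ := ⟨⟨fun j => (2 * j, j), by simp⟩, fun a b => by ext <;> simp; ring⟩
  let fD : ℤ →+ ℤ × ℤ := ⟨⟨fun j => (0, j), by simp⟩, fun a b => by ext <;> simp⟩
  obtain ⟨c, hc⟩ := exists_gen ((trL ψ).comap fJ)
  obtain ⟨d, hd⟩ := exists_gen ((trL ψ).comap fD)
  replace hc : ∀ x : ℤ, (2 * x, x) ∈ trL ψ ↔ (c : ℤ) ∣ x := fun x => hc x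
  replace hd : ∀ x : ℤ, (0, x) ∈ trL ψ ↔ (d : ℤ) ∣ x := fun x => hd x
  have hcm : ∀ i : ℤ, (2 * (c * i), c * i) ∈ trL ψ := fun i => (hc _).2 ⟨i, rfl⟩
  obtain ⟨l, hl⟩ := (hc c0).1 hg2
  obtain ⟨j, rfl⟩ : ∃ j, l = 2 * j + 1 := by
    rcases Int.even_or_odd' l with ⟨j, h | h⟩
    · exact absurd (by rw [hl, h]; ring) (H3 _ (hcm j))
    · exact ⟨j, h⟩
  have hL : ∀ t, t ∈ trL ψ ↔ ∃ p : ℤ, t.1 = 2 * (c * p) ∧ (d : ℤ) ∣ t.2 - c * p := by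
    intro t
    constructor
    · intro ht
      obtain ⟨m, hm⟩ := (hc _).1 (dbl t ht)
      rcases Int.even_or_odd' m with ⟨p, h | h⟩
      · refine ⟨p, by rw [hm, h]; ring, (hd _).1 ?_⟩
        have h2 := sub_mem ht (hcm p)
        have e1 : t - (2 * (c * p), c * p) = (0, t.2 - c * p) := by
          ext
          · simp only [Prod.fst_sub]; rw [hm, h]; ring
          · simp only [Prod.snd_sub]
        rwa [e1] at h2
      · refine absurd ?_ (H3 _ (sub_mem ht (hcm (p - j))))
        simp only [Prod.fst_sub]; rw [hm, h, hl]; ring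
    · rintro ⟨p, h1, h2⟩
      have h3 := add_mem ((hd _).2 h2) (hcm p)
      have e1 : (0, t.2 - c * p) + (2 * (c * p), c * p) = t := by
        ext
        · simp only [Prod.fst_add]; rw [h1]; ring
        · simp only [Prod.snd_add]; ring
      rwa [e1] at h3
  have hc0 : c ≠ 0 := by
    rintro rfl
    exact H3 0 (zero_mem _) (by rw [hl]; simp)
  have hd0 : d ≠ 0 := by
    rintro rfl
    obtain ⟨x, y, hxy, he⟩ := Finite.exists_ne_map_eq_of_infinite (fun k : ℤ => ψ (0, k))
    rcases H2 _ _ he with h | h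
    · have e1 : ((0, y) - (0, x) : ℤ × ℤ) = (0, y - x) := by simp
      rw [e1, hd] at h
      have := zero_dvd_iff.1 (by simpa using h : (0 : ℤ) ∣ y - x)
      omega
    · exact H3 _ (neg_mem h) (by simp [sg])
  refine ⟨c, d, e - c * j, hc0, hd0, fun z w => ?_⟩
  have G1 : ∀ u, ψ ((c0, e) + sg u - (2 * (c * j), c * j)) = ψ u := by
    intro u
    rw [sub_eq_add_neg, neg_mem (hcm j), H1]
  constructor
  · intro h
    rcases H2 _ _ h with h | h
    · rw [hL] at h
      obtain ⟨p, h1, h2⟩ := h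
      refine .inl ⟨p, ?_, ?_⟩
      · rw [← h1]; simp
      · have e1 : w.2 - z.2 - c * p = (w - (e - c * j, 0) - (z - (e - c * j, 0))).2 - c * p := by
          simp
        rwa [e1]
    · rw [hL] at h
      obtain ⟨p, h1, h2⟩ := h
      refine .inr ⟨p + j, ?_, ?_⟩
      · simp only [Prod.fst_sub, Prod.fst_add, sg] at h1
        rw [hl] at h1
        linear_combination h1
      · simp only [Prod.fst_sub, Prod.fst_add, sg, Prod.snd_sub, Prod.snd_add] at h2
        have e1 : w.2 - (z.1 - z.2) - c * (p + j) =
          w.2 - 0 - (e + (z.1 - (e - c * j) - (z.2 - 0))) - c * p := by ring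
        rwa [e1]
  · rintro (⟨p, h1, h2⟩ | ⟨p, h1, h2⟩)
    · have ht : w - z ∈ trL ψ := (hL _).2 ⟨p, h1, h2⟩
      have := ht (z - (e - c * j, 0))
      rw [← this]; congr 1; abel
    · have ht : w - (e - c * j, 0) -
          ((c0, e) + sg (z - (e - c * j, 0)) - (2 * (c * j), c * j)) ∈ trL ψ := by
        rw [hL]
        refine ⟨p, ?_, ?_⟩
        · simp only [Prod.fst_sub, Prod.fst_add, sg]
          rw [hl]
          linear_combination h1
        · simp only [Prod.fst_sub, Prod.fst_add, sg, Prod.snd_sub, Prod.snd_add]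
          have e1 : w.2 - (z.1 - z.2) - c * p = w.2 - 0 -
            (e + (z.1 - (e - c * j) - (z.2 - 0)) - c * j) - c * p := by ring
          rwa [← e1]
      have := ht ((c0, e) + sg (z - (e - c * j, 0)) - (2 * (c * j), c * j))
      rw [add_sub_cancel, G1] at this
      exact this.symm

lemma rfl6_cases : ∀ (τ : Bool) (d : DihedralGroup 6), (∃ i, d = .r i) ∨
    ∃ i, d * rfl6 τ = .r i := by decide

lemma rfl6_sq : ∀ (τ : Bool) (d : DihedralGroup 6), d * rfl6 τ = .r 0 → d = rfl6 τ := by decide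

lemma rfl6_moves : ∀ τ : Bool, ∃ j, dp (rfl6 τ) j ≠ j := by decide

lemma cB_sub (τ : Bool) (z w : ℤ × ℤ) : cB τ (z - w) = cB τ z - cB τ w := by
  rw [eq_sub_iff_add_eq, ← cB_add, sub_add_cancel]

lemma cA_sub (τ : Bool) (z w : ℤ × ℤ) : cA τ (z - w) = cA τ z - cA τ w := by
  rw [eq_sub_iff_add_eq, ← cA_add, sub_add_cancel]

lemma act_r0 (z : ℤ × ℤ) : act (.r 0) z = z := act_one z

lemma rfl_classify {φ : ℤ × ℤ → Fin n} (h : Good φ) {τ : Bool} {g : ℤ × ℤ}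
    (hg : ∀ u, φ (g + act (rfl6 τ) u) = φ u) :
    ∃ (c d : ℕ) (v : ℤ × ℤ), c ≠ 0 ∧ d ≠ 0 ∧
      ∀ z w, φ (v + z) = φ (v + w) ↔ KRel c d (cA τ z) (cA τ w) := by
  set ψ : ℤ × ℤ → Fin n := fun z => φ (cB τ z) with hψ
  have hmem : ∀ t, t ∈ trL ψ ↔ cB τ t ∈ trL φ := by
    intro t
    constructor
    · intro ht z
      have := ht (cA τ z)
      simp only [hψ, cB_add, cB_cA] at this
      exact this
    · intro ht z
      simp only [hψ, cB_add]
      exact ht _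
  have H1 : ∀ u, ψ (((cA τ g).1, (cA τ g).2) + sg u) = ψ u := by
    intro u
    simp only [hψ, Prod.mk.eta, cB_add, cB_cA, cB_sg]
    exact hg _
  have H2 : ∀ z w, ψ z = ψ w →
      w - z ∈ trL ψ ∨ w - (((cA τ g).1, (cA τ g).2) + sg z) ∈ trL ψ := by
    intro z w he
    obtain ⟨f, hf⟩ := h.loc' he
    rcases rfl6_cases τ f with ⟨i, rfl⟩ | ⟨i, hi⟩
    · left
      obtain rfl := h.no_rot hf
      rw [hmem, cB_sub]
      intro u
      have := hf u
      rw [act_r0, act_r0] at this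
      rw [← this]; congr 1; abel
    · right
      have h2 : ∀ u, φ (cB τ w - act f (cB τ z) + act f g + act (.r i) u) = φ u := by
        intro u
        rw [← hi, act_mul, add_assoc, ← act_add, hf, hg]
      obtain rfl := h.no_rot h2
      obtain rfl := rfl6_sq _ _ hi
      rw [hmem, cB_sub, cB_add, Prod.mk.eta, cB_cA, cB_sg]
      intro u
      obtain ⟨y, rfl⟩ : ∃ y, u = g + act (rfl6 τ) y :=
        ⟨act (rfl6 τ)⁻¹ (u - g), by rw [act_act_inv, add_sub_cancel]⟩
      rw [hg, ← hf y]; congr 1; abel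
  have H3 : ∀ t ∈ trL ψ, t.1 ≠ (cA τ g).1 := by
    intro t ht he
    have h1 : ∀ u, ψ ((0, (cA τ g).2 - t.2) + sg u) = ψ u := by
      intro u
      rw [← H1 u, ← neg_mem ht (((cA τ g).1, (cA τ g).2) + sg u)]
      congr 1
      ext
      · simp only [Prod.fst_add, Prod.fst_neg]; rw [he]; ring
      · simp only [Prod.snd_add, Prod.snd_neg]; ring
    set f := (cA τ g).2 - t.2
    have h2 : ∀ v, ψ ((f, f) + sg v) = ψ ((f, f) + v) := by
      intro v
      rw [← h1 ((f, f) + v), sg_add, ← add_assoc]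
      congr 2
      ext <;> simp [sg]
    obtain ⟨j, hj⟩ := rfl6_moves τ
    have h3 := h2 (cA τ (hx j))
    simp only [hψ, cB_add, cB_sg, cB_cA, act_hx] at h3
    exact hj (h.star _ _ _ h3)
  obtain ⟨c, d, e', hc, hd, hk⟩ := glide_classify H1 H2 H3
  refine ⟨c, d, -cB τ (e', 0), hc, hd, fun z w => ?_⟩
  rw [← hk]
  simp only [hψ, cB_sub, cB_cA, neg_add_eq_sub]

lemma card_ker {A B C : Type*} {f : A → B} {g : A → C} (hf : Function.Surjective f)
    (hg : Function.Surjective g) (h : ∀ x y, f x = f y ↔ g x = g y) : Nat.card B = Nat.card C := by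
  rw [← Nat.card_congr (Setoid.quotientKerEquivOfSurjective f hf),
    ← Nat.card_congr (Setoid.quotientKerEquivOfSurjective g hg)]
  have : Setoid.ker f = Setoid.ker g := Setoid.ext fun x y => h x y
  rw [this]

lemma valid_of {φ : ℤ × ℤ → Fin n} (h : Good φ) {τ : Bool} {c d : ℕ} {v : ℤ × ℤ}
    (hc : c ≠ 0) (hd : d ≠ 0)
    (hk : ∀ z w, φ (v + z) = φ (v + w) ↔ KRel c d (cA τ z) (cA τ w)) :
    KValid τ c d ∧ c * d = n := by
  have inj : ∀ z w, HexSmall (z - w) → KRel c d (cA τ z) (cA τ w) → z = w := by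
    intro z w hs hr
    exact add_left_cancel (h.inj (v + z) (v + w) (by rwa [add_sub_add_left_eq_sub]) ((hk z w).2 hr))
  constructor
  · cases τ
    · simp only [KValid, cond_false]
      have hcc : ∀ m : ℤ, HexSmall (m - c, m) → False := by
        intro m hs
        have := inj (m, 0) (c, -m) (by simpa using hs)
          (.inr ⟨0, by simp [cA], by simp [cA]⟩)
        rw [Prod.mk.injEq] at this
        omega
      have hdd : HexSmall (d, d) → False := by
        intro hs
        have := inj (0, 0) (-d, -d) (by simpa using hs)
          (.inl ⟨0, by simp [cA], by simp [cA]⟩)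
        rw [Prod.mk.injEq] at this
        omega
      constructor
      · by_contra hlt
        have : c = 1 ∨ c = 2 ∨ c = 3 ∨ c = 4 := by omega
        rcases this with rfl | rfl | rfl | rfl
        · exact hcc 0 (by decide)
        · exact hcc 1 (by decide)
        · exact hcc 1 (by decide)
        · exact hcc 2 (by decide)
      · by_contra hlt
        have : d = 1 := by omega
        subst this
        exact hdd (by decide)
    · simp only [KValid, cond_true]
      have hcc : HexSmall (-c, 0) → False := by
        intro hs
        have := inj (0, 0) (c, 0) (by simpa using hs)
          (.inr ⟨0, by simp [cA], by simp [cA]⟩)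
        rw [Prod.mk.injEq] at this
        omega
      have hdd : HexSmall (d, -d) → False := by
        intro hs
        have := inj (0, 0) (-d, d) (by simpa using hs)
          (.inl ⟨0, by simp [cA], by simp [cA]⟩)
        rw [Prod.mk.injEq] at this
        omega
      constructor
      · by_contra hlt
        have : c = 1 ∨ c = 2 := by omega
        rcases this with rfl | rfl
        · exact hcc (by decide)
        · exact hcc (by decide)
      · by_contra hlt
        have : d = 1 ∨ d = 2 := by omega
        rcases this with rfl | rfl
        · exact hdd (by decide)
        · exact hdd (by decide)
  · have hf : Function.Surjective (fun z => φ (v + cB τ z)) := by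
      intro y
      obtain ⟨x, rfl⟩ := h.surj y
      exact ⟨cA τ (x - v), by simp only [cB_cA, add_sub_cancel]⟩
    have := card_ker hf (kN_surj hc hd) (fun x y => by
      rw [kN_iff hc, hk, cA_cB, cA_cB])
    rw [card_zmod2 hc hd, Nat.card_fin] at this
    exact this.symm

lemma refl_conj : ∀ d : DihedralGroup 6, (∃ i, d = .r i) ∨
    ∃ (τ : Bool) (e : DihedralGroup 6), d = e * rfl6 τ * e⁻¹ := by decide

lemma Good.comp_act {φ : ℤ × ℤ → Fin n} (h : Good φ) (e : DihedralGroup 6) :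
    Good (fun z => φ (act e z)) := by
  refine ⟨?_, ?_, ?_⟩
  · intro y
    obtain ⟨x, rfl⟩ := h.surj y
    exact ⟨act e⁻¹ x, by simp only [act_act_inv]⟩
  · intro z w hs he
    exact act_injective e (h.inj _ _ (by rw [← act_sub]; exact small_act _ _ hs) he)
  · intro z w he
    obtain ⟨d, hd⟩ := h.loc _ _ he
    refine ⟨e⁻¹ * d * e, fun u => ?_⟩
    simp only [act_add, act_mul, act_act_inv]
    exact hd _

lemma klein_classify {φ : ℤ × ℤ → Fin n} (h : Good φ) (ho : ¬ OnlyRot φ) :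
    ∃ (τ : Bool) (c d : ℕ), KValid τ c d ∧ c * d = n ∧ ∃ v e, ∀ z w,
      KRel c d (cA τ z) (cA τ w) ↔ φ (v + act e z) = φ (v + act e w) := by
  unfold OnlyRot at ho
  push Not at ho
  obtain ⟨w, f, hf, hn⟩ := ho
  rcases refl_conj f with ⟨i, hi⟩ | ⟨τ, e, rfl⟩
  · exact absurd hi (hn i)
  have h' := h.comp_act e
  obtain ⟨c, d, v, hc, hd, hk⟩ := rfl_classify h' (τ := τ) (g := act e⁻¹ w) (fun u => by
    have := hf (act e u)
    rw [act_mul, act_mul, act_inv_act] at this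
    simp only [act_add, act_act_inv]
    exact this)
  obtain ⟨h1, h2⟩ := valid_of h' hc hd hk
  refine ⟨τ, c, d, h1, h2, act e v, e, fun z w => ?_⟩
  rw [← hk, act_add, act_add]

/-! ### Counting Klein bottles -/

/-- Parameters of Klein bottles with `n` vertices. -/
def KPar (n : ℕ) := {p : Bool × ℕ × ℕ // p.2.1 * p.2.2 = n ∧ KValid p.1 p.2.1 p.2.2}

lemma klein_classes (n : ℕ) :
    numClasses n (fun S => IsCombSurface n S ∧ IsEquivelar n S ∧ ¬ IsOrientable S ∧
      eulerChar n S = 0) = Nat.card (KPar n) := by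
  choose Φ h1 h2 using fun p : KPar n => exists_model p.2.2 p.2.1
  rw [numClasses_good (fun S => ¬ IsOrientable S) Φ
    (fun p => model_good p.2.2 (h1 p) (h2 p)) (fun p => model_nonor p.2.2 (h1 p) (h2 p)) ?_ ⊥ ?_]
  · refine (Nat.card_eq_of_bijective (Quotient.mk ⊥) ⟨fun a b h => ?_, Quotient.mk_surjective⟩).symm
    exact Quotient.exact h
  · intro φ hφ ho
    rw [hφ.orient_iff] at ho
    obtain ⟨τ, c, d, hv, hn, v, e, hk⟩ := klein_classify hφ ho
    refine ⟨⟨(τ, c, d), hn, hv⟩, Equi.symm ⟨v, e, fun z w => ?_⟩⟩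
    exact (h2 _ z w).trans (hk z w)
  · intro x y
    constructor
    · intro he
      obtain ⟨a1, a2⟩ := model_iso y.2.2 (h1 y) (h2 x) (h2 y) he
      obtain ⟨-, a4⟩ := model_iso x.2.2 (h1 x) (h2 y) (h2 x) he.symm
      obtain ⟨⟨τ, c, d⟩, b1, b2⟩ := x
      obtain ⟨⟨τ', c', d'⟩, b3, b4⟩ := y
      simp only at a1 a2 a4 b1 b3
      obtain rfl := Nat.dvd_antisymm a2 a4
      subst a1
      have : d = d' := Nat.eq_of_mul_eq_mul_left (Nat.pos_of_ne_zero b2.c_ne) (b1.trans b3.symm)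
      subst this
      rfl
    · intro he
      obtain rfl : x = y := he
      exact ⟨0, 1, fun z w => by simp only [act_one, zero_add]⟩

/-- Number of Klein bottles. -/
def kcount (n : ℕ) : ℕ :=
  ((range (n + 1)).filter fun c => 3 ≤ c ∧ 3 ≤ n / c ∧ c * (n / c) = n).card +
  ((range (n + 1)).filter fun c => 5 ≤ c ∧ 2 ≤ n / c ∧ c * (n / c) = n).card

lemma card_KPar (n : ℕ) : Nat.card (KPar n) = kcount n := by
  classical
  have key : ∀ c d : ℕ, c ≠ 0 → c * d = n → n / c = d := by
    rintro c d hc rfl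
    exact Nat.mul_div_cancel_left d (Nat.pos_of_ne_zero hc)
  have le : ∀ c d : ℕ, d ≠ 0 → c * d = n → c < n + 1 := by
    rintro c d hd rfl
    exact Nat.lt_succ_of_le (Nat.le_mul_of_pos_right _ (Nat.pos_of_ne_zero hd))
  let A := (range (n + 1)).filter fun c => 3 ≤ c ∧ 3 ≤ n / c ∧ c * (n / c) = n
  let B := (range (n + 1)).filter fun c => 5 ≤ c ∧ 2 ≤ n / c ∧ c * (n / c) = n
  have : Nat.card (KPar n) = Nat.card (A ⊕ B) := by
    refine (Nat.card_eq_of_bijective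
      (fun s : A ⊕ B => (s.elim
        (fun c => ⟨(true, c.1, n / c.1), (mem_filter.1 c.2).2.2.2,
          (mem_filter.1 c.2).2.1, (mem_filter.1 c.2).2.2.1⟩)
        (fun c => ⟨(false, c.1, n / c.1), (mem_filter.1 c.2).2.2.2,
          (mem_filter.1 c.2).2.1, (mem_filter.1 c.2).2.2.1⟩) : KPar n)) ⟨?_, ?_⟩).symm
    · rintro (⟨x, hx⟩ | ⟨x, hx⟩) (⟨y, hy⟩ | ⟨y, hy⟩) h
      · have := congrArg (fun p : KPar n => p.1.2.1) h
        simp only [Sum.elim_inl] at this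
        subst this; rfl
      · have := congrArg (fun p : KPar n => p.1.1) h
        exact absurd (show true = false from this) (by decide)
      · have := congrArg (fun p : KPar n => p.1.1) h
        exact absurd (show false = true from this) (by decide)
      · have := congrArg (fun p : KPar n => p.1.2.1) h
        simp only [Sum.elim_inr] at this
        subst this; rfl
    · rintro ⟨⟨τ, c, d⟩, h1, h2⟩
      have hk := key c d h2.c_ne h1
      have hl := le c d h2.d_ne h1
      simp only at hk hl h1
      subst hk
      cases τ
      · exact ⟨.inr ⟨c, mem_filter.2 ⟨mem_range.2 hl, h2.1, h2.2, h1⟩⟩, rfl⟩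
      · exact ⟨.inl ⟨c, mem_filter.2 ⟨mem_range.2 hl, h2.1, h2.2, h1⟩⟩, rfl⟩
  rw [this, Nat.card_sum, Nat.card_eq_fintype_card, Nat.card_eq_fintype_card, Fintype.card_coe,
    Fintype.card_coe]
  rfl

lemma klein_total : (∑ n ∈ Finset.Icc 4 100, numClasses n (fun S => IsCombSurface n S ∧
      IsEquivelar n S ∧ ¬ IsOrientable S ∧ eulerChar n S = 0)) = 364 := by
  rw [sum_congr rfl fun n _ => (klein_classes n).trans (card_KPar n)]
  decide +kernel

end KleinClass

/-- There are exactly 1357 equivelar triangulations of the torus (orientable,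
χ = 0) and exactly 364 equivelar triangulations of the Klein bottle
(non-orientable, χ = 0) with up to 100 vertices. -/
theorem num_equivelar_torus_klein_bottle :
    (∑ n ∈ Finset.Icc 4 100, numClasses n (fun S => IsCombSurface n S ∧
      IsEquivelar n S ∧ IsOrientable S ∧ eulerChar n S = 0)) = 1357 ∧
    (∑ n ∈ Finset.Icc 4 100, numClasses n (fun S => IsCombSurface n S ∧
      IsEquivelar n S ∧ ¬ IsOrientable S ∧ eulerChar n S = 0)) = 364 := by
  exact ⟨torus_total, klein_total⟩
end

section
/- There do not exist integers p ≥ 3, q ≥ 3, and n > 2p satisfying q·(p − 2)·n = 2·p·(n + 1). (This is the arithmetic statement behind the fact that there are no equivelar polyhedral maps of any type (p,q;n) on a surface of Euler characteristic −1.) -/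
open Finset

/-- There are no integers `p ≥ 3`, `q ≥ 3`, `n > 2p` with
`q·(p - 2)·n = 2·p·(n + 1)`: there are no equivelar polyhedral maps
on a surface of Euler characteristic -1. -/
theorem no_equivelar_map_chi_neg_one :
    ¬ ∃ p q n : ℤ, 3 ≤ p ∧ 3 ≤ q ∧ 2 * p < n ∧
      q * (p - 2) * n = 2 * p * (n + 1) := by
  rintro ⟨p, q, n, hp, hq, hn, h⟩
  have hd : n ∣ 2 * p := ⟨q * (p - 2) - 2 * p, by linarith⟩
  have hle := Int.le_of_dvd (by omega) hd
  omega
end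

section
/- For every negative integer χ, the set of triples (p, q, n) of integers with p ≥ 3, q ≥ 3, n > 2p, and q·(p − 2)·n = 2·p·(n − χ) is finite. (This is the arithmetic statement behind the fact that a surface of negative Euler characteristic carries only finitely many equivelar polyhedral maps.) -/
open Finset

/-- For every negative integer `χ`, there are only finitely many triples
`(p, q, n)` with `p ≥ 3`, `q ≥ 3`, `n > 2p` and `q·(p - 2)·n = 2·p·(n - χ)`:
a surface of negative Euler characteristic carries only finitely many
equivelar polyhedral maps. -/
theorem equivelar_map_triples_finite (χ : ℤ) (hχ : χ < 0) :
    {t : ℤ × ℤ × ℤ | 3 ≤ t.1 ∧ 3 ≤ t.2.1 ∧ 2 * t.1 < t.2.2 ∧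
      t.2.1 * (t.1 - 2) * t.2.2 = 2 * t.1 * (t.2.2 - χ)}.Finite := by
  have key : ∀ p q n : ℤ, 3 ≤ p → 3 ≤ q → 2 * p < n →
      q * (p - 2) * n = 2 * p * (n - χ) →
      p ≤ 6 - χ ∧ q ≤ 6 - χ ∧ n ≤ 2 * (6 - χ) * (-χ) := by
    intro p q n hp hq hn h
    have hkn : (q * (p - 2) - 2 * p) * n = 2 * p * (-χ) := by linarith
    have hpc : 0 < 2 * p * (-χ) := by
      apply mul_pos <;> linarith
    have hk : 0 < q * (p - 2) - 2 * p := by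
      by_contra hcon
      push Not at hcon
      have := mul_nonpos_of_nonpos_of_nonneg hcon (show 0 ≤ n by linarith)
      linarith
    have hkc : q * (p - 2) - 2 * p < -χ := by
      by_contra hcon
      push Not at hcon
      have h1 : (-χ) * n ≤ (q * (p - 2) - 2 * p) * n :=
        mul_le_mul_of_nonneg_right hcon (by linarith)
      have h2 : (-χ) * (2 * p) < (-χ) * n :=
        mul_lt_mul_of_pos_left hn (by linarith)
      linarith
    have hprod : (q - 2) * (p - 2) < 4 - χ := by linarith
    have hP : p ≤ 6 - χ := by nlinarith
    have hQ : q ≤ 6 - χ := by nlinarith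
    refine ⟨hP, hQ, ?_⟩
    have h3 : 1 * n ≤ (q * (p - 2) - 2 * p) * n :=
      mul_le_mul_of_nonneg_right (by linarith) (by linarith)
    have h4 : p * (-χ) ≤ (6 - χ) * (-χ) :=
      mul_le_mul_of_nonneg_right hP (by linarith)
    linarith
  refine ((Set.finite_Icc (3 : ℤ) (6 - χ)).prod ((Set.finite_Icc (3 : ℤ) (6 - χ)).prod
    (Set.finite_Icc (0 : ℤ) (2 * (6 - χ) * (-χ))))).subset ?_
  rintro ⟨p, q, n⟩ ⟨hp, hq, hn, h⟩
  simp only at hp hq hn h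
  obtain ⟨a, b, c⟩ := key p q n hp hq hn h
  exact ⟨⟨hp, a⟩, ⟨hq, b⟩, ⟨by linarith, c⟩⟩
end
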